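/- One-shot Marton inner bound with common message. Let 0 < ε < 1 and set L := log₂(1/ε). Let U₀, U₁, U₂ be finite sets, let p be a probability distribution on U₀ × U₁ × U₂, and for each (u₀,u₁,u₂) let ρ_{u₀,u₁,u₂} be a density matrix on ℂ^{d₁} ⊗ ℂ^{d₂}. Let ρ^{U₀U₁U₂Y₁Y₂} := Σ_{u₀,u₁,u₂} p(u₀,u₁,u₂) |u₀,u₁,u₂⟩⟨u₀,u₁,u₂| ⊗ ρ_{u₀,u₁,u₂} be the associated cq-state, with respect to which (together with its marginals) all the information quantities below are computed (Y₁ obtained by tracing out ℂ^{d₂}, Y₂ by tracing out ℂ^{d₁}). Let M₀, M₁, M₂ be positive integers such that: log₂ M₀ + log₂ M₁ ≤ I_H^ε(U₀U₁ : Y₁) − 2 − L; log₂ M₀ + log₂ M₂ ≤ I_H^ε(U₀U₂ : Y₂) − 2 − L; log₂ M₀ + log₂ M₁ + log₂ M₂ ≤ I_H^ε(U₀U₂ : Y₂) + I_H^ε(U₁ : Y₁ | U₀) − I_∞^ε(U₁ : U₂ | U₀)_p − 4 − 4L; log₂ M₀ + log₂ M₁ + log₂ M₂ ≤ I_H^ε(U₀U₁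 : Y₁) + I_H^ε(U₂ : Y₂ | U₀) − I_∞^ε(U₁ : U₂ | U₀)_p − 4 − 4L; and 2·log₂ M₀ + log₂ M₁ + log₂ M₂ ≤ I_H^ε(U₀U₁ : Y₁) + I_H^ε(U₀U₂ : Y₂) − I_∞^ε(U₁ : U₂ | U₀)_p − 4 − 4L. Then there exists an (M₀, M₁, M₂, 2⁷·ε^{1/6}) broadcast code for the family {ρ_{u₀,u₁,u₂}}. -/

import Mathlib

/-!
The code is a random superposition codebook with rate splitting, analysed block by block.

*Codebook.* A cloud centre in `U₀` carries the common message and parts of the two private messages.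
Around each centre there are satellites in `U₁` and in `U₂`, drawn independently given the centre,
which carry the remaining parts of the private messages; each satellite comes in several variants.
A block is a centre with its satellites, and distinct blocks are independent.

*Decoding.* A receiver first looks for the block and then for the satellite inside it. For the first
step the tests of a block, taken from `I_H^ε(U₀U₁ : Y₁)`, are merged into the single effect
`W (W + δ)⁻¹` (`exists_union`), which costs a factor `δ⁻¹` on wrong blocks but nothing within the
right one. Both steps are square-root measurements (`exists_pgm`, from the Hayashi–Nagaoka
inequality), composed by gentle measurement (`gentle`); the second step uses the tests of the
conditional quantity `I_H^ε(U₁ : Y₁ | U₀)`. The result is `exists_decoder`, and with `δ = √ε` the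
error is of order `√ε`, well below the claimed `2⁷ ε^{1/6}` when the latter is less than one
(`error_bound`).

*Encoding.* The satellites of the two receivers are conditionally independent, whereas the target law
`p` correlates them. Each pair of variants is given as weight the likelihood ratio of the smoothed
law against the conditionally independent one (`exists_weights`). A weighted average over the pairs
behaves like an average under `p`, and the total weight concentrates at one by a second-moment
estimate (`second_moment`, `blockLaw_mul_le`) as soon as there are `2 ^ t / ε` pairs, where `t` is
the smooth max information. The encoder sends the pair of least error, whose error is at most twice
the weighted mean up to the concentration defect (`min_le_weighted`). Together these give
`exists_code_of_blocks` and `superposition_code`.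

*Rates.* Fourier–Motzkin elimination (`rate_split`) turns the five hypotheses into admissible rates
of cloud centres, satellites and variants, provided the satellite rates leave room for the
variants, that is `t + L ≤ (j₁ - L)⁺ + (j₂ - L)⁺` with `j₁`, `j₂` the conditional quantities of the
receivers. Otherwise the third and fourth hypotheses force the total rate below what either receiver
can decode alone, and all messages are sent as one common message (`common_code`).
-/

open Kronecker ComplexOrder

noncomputable section

/-- The ℓ₁-distance between two real-valued functions on a finite set. -/
def l1dist {S : Type*} [Fintype S] (P Q : S → ℝ) : ℝ := ∑ s, |P s - Q s|

/-- A probability distribution on a finite set: nonnegative and summing to one. -/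
def IsProbDist {S : Type*} [Fintype S] (P : S → ℝ) : Prop :=
  (∀ s, 0 ≤ P s) ∧ ∑ s, P s = 1

/-- The ε-smooth max relative entropy `D_∞^ε(P‖Q)`, as an extended real. -/
def Dmax {X : Type*} [Fintype X] (ε : ℝ) (P Q : X → ℝ) : EReal :=
  sInf ((fun d : ℝ => (d : EReal)) ''
    {d | ∃ P' : X → ℝ, (∀ x, 0 ≤ P' x ∧ P' x ≤ P x) ∧ l1dist P P' ≤ ε ∧
      ∀ x, P' x ≤ (2 : ℝ) ^ d * Q x})

/-- The ε-smooth max conditional mutual information `I_∞^ε(U₁ : U₂ | U₀)_P`. -/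
def smoothImaxCond {U0 U1 U2 : Type*} [Fintype U0] [Fintype U1] [Fintype U2]
    (ε : ℝ) (P : U0 × U1 × U2 → ℝ) : EReal :=
  Dmax ε P (fun u =>
    (∑ b, P (u.1, u.2.1, b)) * (∑ a, P (u.1, a, u.2.2)) / (∑ a, ∑ b, P (u.1, a, b)))

/-- A density matrix: positive semidefinite with trace one. -/
def IsDensity {ι : Type*} [Fintype ι] (ρ : Matrix ι ι ℂ) : Prop :=
  ρ.PosSemidef ∧ ρ.trace = 1

/-- A POVM element: `0 ≤ E ≤ I` in the Loewner order. -/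
def IsPOVMElem {ι : Type*} [Fintype ι] [DecidableEq ι] (E : Matrix ι ι ℂ) : Prop :=
  E.PosSemidef ∧ ((1 : Matrix ι ι ℂ) - E).PosSemidef

/-- The hypothesis testing relative entropy `D_H^ε(α‖β)`, as an extended real:
the supremum of all `d : ℝ` such that some POVM element `E` accepts `α` with probability
at least `1 − ε` while accepting `β` with probability at most `2^{−d}`. -/
def DH {ι : Type*} [Fintype ι] [DecidableEq ι] (ε : ℝ) (α β : Matrix ι ι ℂ) : EReal :=
  sSup ((fun d : ℝ => (d : EReal)) ''
    {d | ∃ E : Matrix ι ι ℂ, IsPOVMElem E ∧ 1 - ε ≤ ((E * α).trace).re ∧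
      ((E * β).trace).re ≤ (2 : ℝ) ^ (-d)})

/-- The classical-quantum state `Σ_u |u⟩⟨u| ⊗ σ_u` (the weights are included in `σ`). -/
def cqState {U ι : Type*} [Fintype U] [DecidableEq U] [Fintype ι]
    (σ : U → Matrix ι ι ℂ) : Matrix (U × ι) (U × ι) ℂ :=
  Matrix.of fun x y => if x.1 = y.1 then σ x.1 x.2 y.2 else 0

/-- Partial trace over the second (right) tensor factor. -/
def trR {α β : Type*} [Fintype α] [Fintype β]
    (M : Matrix (α × β) (α × β) ℂ) : Matrix α α ℂ :=
  Matrix.of fun a a' => ∑ b, M (a, b) (a', b)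

/-- Partial trace over the first (left) tensor factor. -/
def trL {α β : Type*} [Fintype α] [Fintype β]
    (M : Matrix (α × β) (α × β) ℂ) : Matrix β β ℂ :=
  Matrix.of fun b b' => ∑ a, M (a, b) (a, b')

section Marton

variable {U0 U1 U2 : Type*} [Fintype U0] [Fintype U1] [Fintype U2]
  [DecidableEq U0] [DecidableEq U1] [DecidableEq U2] {d1 d2 : ℕ}

/-- `I_H^ε(U₀U₁ : Y₁)` for the cq-state `Σ p(u₀,u₁,u₂)|u₀u₁u₂⟩⟨u₀u₁u₂| ⊗ ρ_{u₀u₁u₂}`. -/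
def IH_U0U1_Y1 (ε : ℝ) (p : U0 × U1 × U2 → ℝ)
    (ρ : U0 × U1 × U2 → Matrix (Fin d1 × Fin d2) (Fin d1 × Fin d2) ℂ) : EReal :=
  DH ε
    (cqState fun v : U0 × U1 =>
      ∑ u2, (p (v.1, v.2, u2) : ℂ) • trR (ρ (v.1, v.2, u2)))
    (cqState fun v : U0 × U1 =>
      ((∑ u2, p (v.1, v.2, u2) : ℝ) : ℂ) • ∑ u, (p u : ℂ) • trR (ρ u))

/-- `I_H^ε(U₀U₂ : Y₂)`. -/
def IH_U0U2_Y2 (ε : ℝ) (p : U0 × U1 × U2 → ℝ)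
    (ρ : U0 × U1 × U2 → Matrix (Fin d1 × Fin d2) (Fin d1 × Fin d2) ℂ) : EReal :=
  DH ε
    (cqState fun v : U0 × U2 =>
      ∑ u1, (p (v.1, u1, v.2) : ℂ) • trL (ρ (v.1, u1, v.2)))
    (cqState fun v : U0 × U2 =>
      ((∑ u1, p (v.1, u1, v.2) : ℝ) : ℂ) • ∑ u, (p u : ℂ) • trL (ρ u))

/-- `I_H^ε(U₁ : Y₁ | U₀)`. -/
def IH_U1_Y1_cond_U0 (ε : ℝ) (p : U0 × U1 × U2 → ℝ)
    (ρ : U0 × U1 × U2 → Matrix (Fin d1 × Fin d2) (Fin d1 × Fin d2) ℂ) : EReal :=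
  DH ε
    (cqState fun v : U0 × U1 =>
      ∑ u2, (p (v.1, v.2, u2) : ℂ) • trR (ρ (v.1, v.2, u2)))
    (cqState fun v : U0 × U1 =>
      (((∑ u2, p (v.1, v.2, u2)) / (∑ a, ∑ b, p (v.1, a, b)) : ℝ) : ℂ) •
        ∑ a, ∑ b, (p (v.1, a, b) : ℂ) • trR (ρ (v.1, a, b)))

/-- `I_H^ε(U₂ : Y₂ | U₀)`. -/
def IH_U2_Y2_cond_U0 (ε : ℝ) (p : U0 × U1 × U2 → ℝ)
    (ρ : U0 × U1 × U2 → Matrix (Fin d1 × Fin d2) (Fin d1 × Fin d2) ℂ) : EReal :=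
  DH ε
    (cqState fun v : U0 × U2 =>
      ∑ u1, (p (v.1, u1, v.2) : ℂ) • trL (ρ (v.1, u1, v.2)))
    (cqState fun v : U0 × U2 =>
      (((∑ u1, p (v.1, u1, v.2)) / (∑ a, ∑ b, p (v.1, a, b)) : ℝ) : ℂ) •
        ∑ a, ∑ b, (p (v.1, a, b) : ℂ) • trL (ρ (v.1, a, b)))

/-- Existence of an `(M₀, M₁, M₂, δ)` broadcast code for the channel outputs
`ρ_{u₀,u₁,u₂}`: an encoder and POVMs for the two receivers whose average success
probability is at least `1 − δ`. -/
def ExistsBroadcastCode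
    (ρ : U0 × U1 × U2 → Matrix (Fin d1 × Fin d2) (Fin d1 × Fin d2) ℂ)
    (M0 M1 M2 : ℕ) (δ : ℝ) : Prop :=
  ∃ (Enc : Fin M0 × Fin M1 × Fin M2 → U0 × U1 × U2)
    (Λ : Fin M0 × Fin M1 → Matrix (Fin d1) (Fin d1) ℂ)
    (Λ' : Fin M0 × Fin M2 → Matrix (Fin d2) (Fin d2) ℂ),
    (∀ m, (Λ m).PosSemidef) ∧
    ((1 : Matrix (Fin d1) (Fin d1) ℂ) - ∑ m, Λ m).PosSemidef ∧
    (∀ m, (Λ' m).PosSemidef) ∧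
    ((1 : Matrix (Fin d2) (Fin d2) ℂ) - ∑ m, Λ' m).PosSemidef ∧
    1 - δ ≤ ((M0 * M1 * M2 : ℝ))⁻¹ * ∑ m : Fin M0 × Fin M1 × Fin M2,
      (((Λ (m.1, m.2.1) ⊗ₖ Λ' (m.1, m.2.2)) * ρ (Enc m)).trace).re

end Marton

/-! ### Operator inequalities and the two-stage decoder -/

section Operator

variable {A : Type*} [CStarAlgebra A] [PartialOrder A] [StarOrderedRing A]

theorem conj_nonneg' {X Y : A} (hX : 0 ≤ X) (hY : star Y = Y) : 0 ≤ Y * X * Y := by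
  have h := star_left_conjugate_nonneg hX Y
  rwa [hY] at h

theorem sq_le_self' {S : A} (h0 : 0 ≤ S) (h1 : S ≤ 1) : S * S ≤ S := by
  have hs : star S = S := (IsSelfAdjoint.of_nonneg h0).star_eq
  have a1 : 0 ≤ S * (1 - S) * S := conj_nonneg' (sub_nonneg.2 h1) hs
  have a2 : 0 ≤ (1 - S) * S * (1 - S) := conj_nonneg' h0 (by simp [hs])
  have e : S - S * S = S * (1 - S) * S + (1 - S) * S * (1 - S) := by noncomm_ring
  rw [← sub_nonneg, e]
  exact add_nonneg a1 a2

/-- The Hayashi–Nagaoka operator inequality. `V` plays the role of `(S + T) ^ (1/2)` and `G` that of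
its inverse; operator monotonicity of the square root enters through `S ≤ V`. -/
theorem hayashi_nagaoka {S T V G : A} (hS0 : 0 ≤ S) (hS1 : S ≤ 1) (hT : 0 ≤ T)
    (hV0 : 0 ≤ V) (hV : V * V = S + T) (hVG : V * G = 1) (hGV : G * V = 1)
    (hG : star G = G) :
    1 - G * S * G ≤ (2 : ℝ) • (1 - S) + (4 : ℝ) • T := by
  have hVs : star V = V := (IsSelfAdjoint.of_nonneg hV0).star_eq
  have hVS : S ≤ V := by
    have h1 : S * S ≤ V * V := by
      rw [hV]
      exact (sq_le_self' hS0 hS1).trans (le_add_of_nonneg_right hT)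
    have h2 := CFC.sqrt_le_sqrt _ _ h1
    rwa [CFC.sqrt_mul_self S hS0, CFC.sqrt_mul_self V hV0] at h2
  have e1 : 1 - G * S * G = G * T * G := by
    have : G * (V * V) * G = 1 := by
      rw [show G * (V * V) * G = (G * V) * (V * G) by noncomm_ring, hGV, hVG, one_mul]
    rw [hV] at this
    rw [← this]; noncomm_ring
  have p1 : 0 ≤ (2 - G) * T * (2 - G) := conj_nonneg' hT (by simp [hG])
  have p2 : 0 ≤ (G - 1) * S * (G - 1) := conj_nonneg' hS0 (by simp [hG])
  have e2 : (G - 1) * (V * V) * (G - 1) = 1 - 2 * V + V * V := by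
    rw [show (G - 1) * (V * V) * (G - 1)
      = (G * V) * (V * G) - (G * V) * V - V * (V * G) + V * V by noncomm_ring, hGV, hVG]
    noncomm_ring
  have e3 : (2 : ℝ) • (1 - S) + (4 : ℝ) • T - (1 - G * S * G)
      = (2 - G) * T * (2 - G) + (2 : ℝ) • ((G - 1) * S * (G - 1)) + (4 : ℝ) • (V - S) := by
    have e4 : (G - 1) * S * (G - 1) + (G - 1) * T * (G - 1) = 1 - 2 * V + (S + T) := by
      rw [← hV, ← e2, hV]; noncomm_ring
    rw [e1]
    have e5 : (2 - G) * T * (2 - G) = (2 : ℝ) • T + (2 : ℝ) • ((G - 1) * T * (G - 1)) - G * T * G := by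
      simp only [two_smul]; noncomm_ring
    have e6 : (G - 1) * S * (G - 1) = 1 - 2 * V + (S + T) - (G - 1) * T * (G - 1) :=
      eq_sub_of_add_eq e4
    rw [e5, e6, show (4 : ℝ) = 2 + 2 by norm_num]
    simp only [add_smul, two_smul]; noncomm_ring
  rw [← sub_nonneg, e3]
  have := smul_nonneg (zero_le_two (α := ℝ)) p2
  have := smul_nonneg (by norm_num : (0 : ℝ) ≤ 4) (sub_nonneg.2 hVS)
  positivity

theorem delta_unit {W : A} (hW : 0 ≤ W) {δ : ℝ} (hδ : 0 < δ) :
    IsStrictlyPositive (W + δ • (1 : A)) := by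
  refine IsStrictlyPositive.nonneg_add hW ?_
  exact IsStrictlyPositive.smul hδ (by simp)

/-- Square-root measurement, regularised by `δ` so that the operator to be inverted is strictly
positive. -/
theorem exists_pgm {ι : Type*} [Fintype ι] [DecidableEq ι] (E : ι → A)
    (h0 : ∀ i, 0 ≤ E i) (h1 : ∀ i, E i ≤ 1) {δ : ℝ} (hδ : 0 < δ) :
    ∃ Γ : ι → A, (∀ i, 0 ≤ Γ i) ∧ ∑ i, Γ i ≤ 1 ∧
      ∀ i, 1 - Γ i ≤ (2 : ℝ) • (1 - E i) + (4 : ℝ) • (∑ j ∈ Finset.univ.erase i, E j)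
        + (4 * δ) • (1 : A) := by
  set W : A := ∑ i, E i + δ • (1 : A) with hWdef
  have hsum : 0 ≤ ∑ i, E i := Finset.sum_nonneg fun i _ => h0 i
  have hW : IsStrictlyPositive W := delta_unit hsum hδ
  have hVp : IsStrictlyPositive (CFC.sqrt W) := hW.sqrt
  set V := CFC.sqrt W with hVdef
  have hVV : V * V = W := CFC.sqrt_mul_sqrt_self W hW.nonneg
  obtain ⟨u, hu⟩ := hVp.isUnit
  set G : A := ((u⁻¹ : Aˣ) : A) with hGdef
  have hVG : V * G = 1 := by rw [← hu]; simp [hGdef]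
  have hGV : G * V = 1 := by rw [← hu]; simp [hGdef]
  have hVs : star V = V := (IsSelfAdjoint.of_nonneg hVp.nonneg).star_eq
  have hG : star G = G := by
    have h2 : star G * V = 1 := by
      have := congrArg star hVG
      simpa [hVs] using this
    calc star G = star G * (V * G) := by rw [hVG, mul_one]
      _ = G := by rw [← mul_assoc, h2, one_mul]
  refine ⟨fun i => G * E i * G, fun i => conj_nonneg' (h0 i) hG, ?_, fun i => ?_⟩
  · rw [← Finset.sum_mul, ← Finset.mul_sum]
    have e : (1 : A) = G * W * G := by
      rw [← hVV, show G * (V * V) * G = (G * V) * (V * G) by noncomm_ring, hGV, hVG, one_mul]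
    rw [e, ← sub_nonneg, ← sub_mul, ← mul_sub]
    refine conj_nonneg' ?_ hG
    rw [hWdef, add_sub_cancel_left]
    exact smul_nonneg hδ.le zero_le_one
  · have hT : 0 ≤ ∑ j ∈ Finset.univ.erase i, E j + δ • (1 : A) :=
      add_nonneg (Finset.sum_nonneg fun i _ => h0 i) (smul_nonneg hδ.le zero_le_one)
    have h := hayashi_nagaoka (h0 i) (h1 i) hT hVp.nonneg (G := G)
      (by rw [hVV, hWdef, ← add_assoc, Finset.add_sum_erase _ _ (Finset.mem_univ i)])
      hVG hGV hG
    refine h.trans (le_of_eq ?_)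
    rw [smul_add, smul_smul, add_assoc]

/-- An operator substitute for the union of events: an effect that dominates every `E i` up to `δ`
in its failure, yet is at most `δ⁻¹ • ∑ i, E i`. It is `W (W + δ)⁻¹` with `W = ∑ i, E i`, and its
complement `δ (W + δ)⁻¹` is antitone in `W`. -/
theorem exists_union {ι : Type*} [Fintype ι] (E : ι → A)
    (h0 : ∀ i, 0 ≤ E i) (h1 : ∀ i, E i ≤ 1) {δ : ℝ} (hδ : 0 < δ) :
    ∃ U : A, 0 ≤ U ∧ U ≤ 1 ∧ U ≤ δ⁻¹ • ∑ i, E i ∧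
      ∀ i, 1 - U ≤ (1 - E i) + δ • (1 : A) := by
  set W : A := ∑ i, E i with hWdef
  have hW0 : 0 ≤ W := Finset.sum_nonneg fun i _ => h0 i
  have hWs : star W = W := (IsSelfAdjoint.of_nonneg hW0).star_eq
  obtain ⟨b, hb⟩ := (delta_unit hW0 hδ).isUnit
  have hb0 : 0 ≤ (b : A) := by rw [hb]; exact (delta_unit hW0 hδ).nonneg
  set G : A := ((b⁻¹ : Aˣ) : A) with hGdef
  have hG0 : 0 ≤ G := CFC.inv_nonneg_of_nonneg b hb0
  have hGs : star G = G := (IsSelfAdjoint.of_nonneg hG0).star_eq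
  have hbG : W * G + δ • G = 1 := by
    have : (b : A) * G = 1 := by simp [hGdef]
    rw [hb, add_mul, smul_mul_assoc, one_mul] at this
    exact this
  have hGb : G * W + δ • G = 1 := by
    have : G * (b : A) = 1 := by simp [hGdef]
    rw [hb, mul_add, mul_smul_comm, mul_one] at this
    exact this
  have hWG : 1 - δ • G = W * G := by rw [← hbG]; simp
  have hcomm : G * W = W * G := by rw [← hWG, ← hGb]; simp
  refine ⟨1 - δ • G, ?_, ?_, ?_, fun i => ?_⟩
  · have e : 1 - δ • G = G * (W * W) * G + δ • (G * W * G) := by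
      have h2 : W * G = (G * W + δ • G) * (W * G) := by rw [hGb, one_mul]
      rw [hWG, h2, add_mul, smul_mul_assoc]; simp only [mul_assoc]
    rw [e]
    have hWW : 0 ≤ W * W := by
      have := star_mul_self_nonneg W
      rwa [hWs] at this
    exact add_nonneg (conj_nonneg' hWW hGs) (smul_nonneg hδ.le (conj_nonneg' hW0 hGs))
  · exact sub_le_self _ (smul_nonneg hδ.le hG0)
  · -- `W (W + δ)⁻¹ ≤ δ⁻¹ W`, with a difference that is manifestly nonnegative
    have e : δ⁻¹ • W - (1 - δ • G) = δ⁻¹ • (W * G * W) := by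
      have h2 : W * G * W = W - δ • (W * G) := by
        have : W * (G * W + δ • G) = W := by rw [hGb, mul_one]
        rw [mul_add, mul_smul_comm, ← mul_assoc] at this
        exact eq_sub_of_add_eq this
      rw [h2, smul_sub, smul_smul, inv_mul_cancel₀ hδ.ne', one_smul, hWG]
    rw [← sub_nonneg, e]
    exact smul_nonneg (by positivity) (conj_nonneg' hG0 hWs)
  · -- the inverse is operator antitone, so `W` may be replaced by `E i`
    have hE0 := h0 i
    have hEs : star (E i) = E i := (IsSelfAdjoint.of_nonneg hE0).star_eq
    obtain ⟨a, ha⟩ := (delta_unit hE0 hδ).isUnit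
    have ha0 : 0 ≤ (a : A) := by rw [ha]; exact (delta_unit hE0 hδ).nonneg
    set H : A := ((a⁻¹ : Aˣ) : A) with hHdef
    have hH0 : 0 ≤ H := CFC.inv_nonneg_of_nonneg a ha0
    have hHs : star H = H := (IsSelfAdjoint.of_nonneg hH0).star_eq
    have hab : (a : A) ≤ b := by
      rw [ha, hb]
      exact add_le_add_left (Finset.single_le_sum (fun j _ => h0 j) (Finset.mem_univ i)) _
    have hGH : G ≤ H := CStarAlgebra.inv_le_inv ha0 hab
    have key : δ • H ≤ (1 - E i) + δ • (1 : A) := by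
      set Z : A := E i + δ • (1 : A) with hZ
      have hHZ : H * Z = 1 := by rw [← ha]; simp [hHdef]
      have hZH : Z * H = 1 := by rw [← ha]; simp [hHdef]
      have hpos : 0 ≤ Z * ((1 - E i) + δ • (1 : A)) * Z - δ • Z := by
        have e : Z * ((1 - E i) + δ • (1 : A)) * Z - δ • Z
            = E i * (1 - E i) * E i + δ • (E i - E i * E i) + (δ * δ) • E i
              + (δ * δ * δ) • (1 : A) := by
          rw [hZ]
          simp only [mul_add, add_mul, mul_sub, sub_mul, smul_add, smul_sub, mul_smul_comm,
            smul_mul_assoc, mul_one, one_mul, smul_smul, mul_assoc]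
          abel
        rw [e]
        have q1 : 0 ≤ E i * (1 - E i) * E i := conj_nonneg' (sub_nonneg.2 (h1 i)) hEs
        have q2 := smul_nonneg hδ.le (sub_nonneg.2 (sq_le_self' hE0 (h1 i)))
        have q3 := smul_nonneg (mul_pos hδ hδ).le hE0
        have q4 := smul_nonneg (mul_pos (mul_pos hδ hδ) hδ).le (zero_le_one (α := A))
        exact add_nonneg (add_nonneg (add_nonneg q1 q2) q3) q4
      have h3 := conj_nonneg' hpos hHs
      have e : H * (Z * ((1 - E i) + δ • (1 : A)) * Z - δ • Z) * H
          = ((1 - E i) + δ • (1 : A)) - δ • H := by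
        rw [mul_sub, sub_mul, mul_smul_comm, smul_mul_assoc, hHZ, one_mul,
          show H * (Z * ((1 - E i) + δ • (1 : A)) * Z) * H
            = (H * Z) * ((1 - E i) + δ • (1 : A)) * (Z * H) by simp only [mul_assoc],
          hHZ, hZH, one_mul, mul_one]
      rw [e] at h3
      exact sub_nonneg.1 h3
    rw [sub_sub_cancel]
    exact (smul_le_smul_of_nonneg_left hGH hδ.le).trans key

/-- Gentle measurement, in operator form: testing `Γ` first and then `D` fails at most about as often
as the two tests separately. -/
theorem gentle {Γ D : A} (h0 : 0 ≤ Γ) (h1 : Γ ≤ 1) (hD0 : 0 ≤ D) (hD1 : D ≤ 1) :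
    1 - CFC.sqrt Γ * D * CFC.sqrt Γ ≤ (3 : ℝ) • (1 - Γ) + (2 : ℝ) • (1 - D) := by
  set g := CFC.sqrt Γ with hg
  have hg0 : 0 ≤ g := CFC.sqrt_nonneg Γ
  have hgg : g * g = Γ := CFC.sqrt_mul_sqrt_self Γ h0
  have hgs : star g = g := (IsSelfAdjoint.of_nonneg hg0).star_eq
  have hg1 : g ≤ 1 := by
    have := CFC.sqrt_le_sqrt _ _ h1
    rwa [CFC.sqrt_one] at this
  have p1 : 0 ≤ (1 + 1 - g) * (1 - D) * (1 + 1 - g) := conj_nonneg' (sub_nonneg.2 hD1) (by simp [hgs])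
  have p2 : 0 ≤ (1 - g) * D * (1 - g) := conj_nonneg' hD0 (by simp [hgs])
  have p3 : 0 ≤ g - g * g := sub_nonneg.2 (sq_le_self' hg0 hg1)
  have e : (3 : ℝ) • (1 - Γ) + (2 : ℝ) • (1 - D) - (1 - g * D * g)
      = (1 + 1 - g) * (1 - D) * (1 + 1 - g) + (2 : ℝ) • ((1 - g) * D * (1 - g))
        + (4 : ℝ) • (g - g * g) := by
    rw [← hgg, show (3 : ℝ) = 1 + 2 by norm_num, show (4 : ℝ) = 2 + 2 by norm_num]
    simp only [add_smul, two_smul, one_smul]; noncomm_ring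
  rw [← sub_nonneg, e]
  exact add_nonneg (add_nonneg p1 (smul_nonneg (by norm_num) p2)) (smul_nonneg (by norm_num) p3)

/-- The two-stage decoder: a square-root measurement of the union operators of the tests `E` finds
the block `m`, and a square-root measurement of the tests `F` finds the codeword `n` inside it.
The unions keep the sum over the wrong codewords of the same block out of the error bound of the
first stage. -/
theorem exists_decoder {M N : Type*} [Fintype M] [Fintype N] [DecidableEq M] [DecidableEq N]
    (E F : M → N → A) (hE0 : ∀ m n, 0 ≤ E m n) (hE1 : ∀ m n, E m n ≤ 1)
    (hF0 : ∀ m n, 0 ≤ F m n) (hF1 : ∀ m n, F m n ≤ 1) {δ : ℝ} (hδ : 0 < δ) :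
    ∃ Λ : M → N → A, (∀ m n, 0 ≤ Λ m n) ∧ ∑ m, ∑ n, Λ m n ≤ 1 ∧
      ∀ m n, 1 - Λ m n ≤ (6 : ℝ) • (1 - E m n) + (4 : ℝ) • (1 - F m n)
        + (8 : ℝ) • (∑ n' ∈ Finset.univ.erase n, F m n')
        + (12 / δ) • (∑ m' ∈ Finset.univ.erase m, ∑ n', E m' n') + (26 * δ) • (1 : A) := by
  choose U hU0 hU1 hUle hUge using fun m => exists_union (E m) (hE0 m) (hE1 m) hδ
  obtain ⟨Γ, hΓ0, hΓs, hΓ⟩ := exists_pgm U hU0 hU1 hδ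
  choose D hD0 hDs hD using fun m => exists_pgm (F m) (hF0 m) (hF1 m) hδ
  have hΓ1 : ∀ m, Γ m ≤ 1 := fun m =>
    (Finset.single_le_sum (fun j _ => hΓ0 j) (Finset.mem_univ m)).trans hΓs
  have hD1 : ∀ m n, D m n ≤ 1 := fun m n =>
    (Finset.single_le_sum (fun j _ => hD0 m j) (Finset.mem_univ n)).trans (hDs m)
  have hgs : ∀ m, star (CFC.sqrt (Γ m)) = CFC.sqrt (Γ m) := fun m =>
    (IsSelfAdjoint.of_nonneg (CFC.sqrt_nonneg (Γ m))).star_eq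
  refine ⟨fun m n => CFC.sqrt (Γ m) * D m n * CFC.sqrt (Γ m),
    fun m n => conj_nonneg' (hD0 m n) (hgs m), ?_, fun m n => ?_⟩
  · refine (Finset.sum_le_sum fun m _ => ?_).trans hΓs
    rw [← Finset.sum_mul, ← Finset.mul_sum]
    have h := conj_nonneg' (sub_nonneg.2 (hDs m)) (hgs m)
    rw [mul_sub, sub_mul, mul_one, CFC.sqrt_mul_sqrt_self _ (hΓ0 m)] at h
    exact sub_nonneg.1 h
  · have a1 := gentle (hΓ0 m) (hΓ1 m) (hD0 m n) (hD1 m n)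
    have a2 : (2 : ℝ) • (1 - U m) ≤ (2 : ℝ) • ((1 - E m n) + δ • (1 : A)) :=
      smul_le_smul_of_nonneg_left (hUge m n) (by norm_num)
    have a3 : ∑ m' ∈ Finset.univ.erase m, U m' ≤
        δ⁻¹ • ∑ m' ∈ Finset.univ.erase m, ∑ n', E m' n' := by
      rw [Finset.smul_sum]
      exact Finset.sum_le_sum fun m' _ => hUle m'
    have a4 := (hΓ m).trans (add_le_add_left
      (add_le_add a2 (smul_le_smul_of_nonneg_left a3 (by norm_num : (0 : ℝ) ≤ 4))) _)
    have a5 := a1.trans (add_le_add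
      (smul_le_smul_of_nonneg_left a4 (by norm_num : (0 : ℝ) ≤ 3))
      (smul_le_smul_of_nonneg_left (hD m n) (by norm_num : (0 : ℝ) ≤ 2)))
    refine a5.trans (le_of_eq ?_)
    have e12 : 12 / δ = 3 * (4 * δ⁻¹) := by ring
    rw [e12]
    module

end Operator

/-! ### Error probabilities, partial traces and tests for cq-states -/

section Trace

variable {ι : Type*} [Fintype ι]

/-- The probability `Re Tr (T σ)` that the effect `T` is observed in the state `σ`. -/
def ev (T σ : Matrix ι ι ℂ) : ℝ := ((T * σ).trace).re

theorem ev_add_left (S T σ : Matrix ι ι ℂ) : ev (S + T) σ = ev S σ + ev T σ := by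
  simp [ev, add_mul]

theorem ev_sub_left (S T σ : Matrix ι ι ℂ) : ev (S - T) σ = ev S σ - ev T σ := by
  simp [ev, sub_mul]

theorem ev_smul_left (r : ℝ) (T σ : Matrix ι ι ℂ) : ev (r • T) σ = r * ev T σ := by
  simp [ev]

theorem ev_sum_left {κ : Type*} (s : Finset κ) (T : κ → Matrix ι ι ℂ) (σ : Matrix ι ι ℂ) :
    ev (∑ k ∈ s, T k) σ = ∑ k ∈ s, ev (T k) σ := by
  simp [ev, Finset.sum_mul, Matrix.trace_sum]

theorem ev_sum_right {κ : Type*} (s : Finset κ) (T : Matrix ι ι ℂ) (σ : κ → Matrix ι ι ℂ) :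
    ev T (∑ k ∈ s, σ k) = ∑ k ∈ s, ev T (σ k) := by
  simp [ev, Finset.mul_sum, Matrix.trace_sum]

theorem ev_smul_right (r : ℝ) (T σ : Matrix ι ι ℂ) : ev T ((r : ℂ) • σ) = r * ev T σ := by
  simp [ev]

theorem ev_one {σ : Matrix ι ι ℂ} [DecidableEq ι] (h : IsDensity σ) : ev 1 σ = 1 := by
  simp [ev, h.2]

theorem ev_nonneg {T σ : Matrix ι ι ℂ} (hT : T.PosSemidef) (hσ : σ.PosSemidef) :
    0 ≤ ev T σ := by
  classical
  open scoped MatrixOrder Matrix.Norms.L2Operator in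
  have hT' : 0 ≤ T := Matrix.nonneg_iff_posSemidef.2 hT
  have hs : CFC.sqrt T * CFC.sqrt T = T := CFC.sqrt_mul_sqrt_self T hT'
  have hss : (CFC.sqrt T).conjTranspose = CFC.sqrt T :=
    (IsSelfAdjoint.of_nonneg (CFC.sqrt_nonneg T)).star_eq
  have h := (hσ.conjTranspose_mul_mul_same (CFC.sqrt T)).trace_nonneg
  have e : ((CFC.sqrt T).conjTranspose * σ * CFC.sqrt T).trace = (T * σ).trace := by
    rw [hss, Matrix.trace_mul_comm, ← mul_assoc, hs]
  rw [e] at h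
  exact (Complex.le_def.1 h).1

theorem ev_mono {S T σ : Matrix ι ι ℂ} (h : (T - S).PosSemidef) (hσ : σ.PosSemidef) :
    ev S σ ≤ ev T σ := by
  have := ev_nonneg h hσ
  rw [ev_sub_left] at this
  linarith

end Trace

/-- The decoder of `exists_decoder`, for matrices and in terms of error probabilities. -/
theorem exists_decoder_matrix {M N : Type*} [Fintype M] [Fintype N] [DecidableEq M] [DecidableEq N]
    {d : ℕ} (E F : M → N → Matrix (Fin d) (Fin d) ℂ)
    (hE : ∀ m n, IsPOVMElem (E m n)) (hF : ∀ m n, IsPOVMElem (F m n)) {δ : ℝ} (hδ : 0 < δ) :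
    ∃ Λ : M → N → Matrix (Fin d) (Fin d) ℂ, (∀ m n, (Λ m n).PosSemidef) ∧
      (1 - ∑ m, ∑ n, Λ m n).PosSemidef ∧
      ∀ m n σ, IsDensity σ → ev (1 - Λ m n) σ ≤ 6 * ev (1 - E m n) σ + 4 * ev (1 - F m n) σ
        + 8 * ∑ n' ∈ Finset.univ.erase n, ev (F m n') σ
        + 12 / δ * ∑ m' ∈ Finset.univ.erase m, ∑ n', ev (E m' n') σ + 26 * δ := by
  open scoped MatrixOrder Matrix.Norms.L2Operator in
  obtain ⟨Λ, h0, h1, h2⟩ := exists_decoder E F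
    (fun m n => Matrix.nonneg_iff_posSemidef.2 (hE m n).1) (fun m n => (hE m n).2)
    (fun m n => Matrix.nonneg_iff_posSemidef.2 (hF m n).1) (fun m n => (hF m n).2) hδ
  refine ⟨Λ, fun m n => Matrix.nonneg_iff_posSemidef.1 (h0 m n), h1, fun m n σ hσ => ?_⟩
  have h := ev_mono (h2 m n) hσ.1
  simpa only [ev_add_left, ev_smul_left, ev_sum_left, ev_one hσ, mul_one] using h

section Bipartite

variable {d1 d2 : ℕ}

theorem ev_trR (T : Matrix (Fin d1) (Fin d1) ℂ)
    (ρ : Matrix (Fin d1 × Fin d2) (Fin d1 × Fin d2) ℂ) :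
    ev (T ⊗ₖ (1 : Matrix (Fin d2) (Fin d2) ℂ)) ρ = ev T (trR ρ) := by
  unfold ev
  congr 1
  simp only [Matrix.trace, Matrix.diag, Matrix.mul_apply, Fintype.sum_prod_type, trR,
    Matrix.kroneckerMap_apply, Matrix.of_apply, Finset.mul_sum, Matrix.one_apply]
  refine Finset.sum_congr rfl fun i _ => ?_
  rw [Finset.sum_comm]
  refine Finset.sum_congr rfl fun j _ => ?_
  refine Finset.sum_congr rfl fun k _ => ?_
  simp

theorem ev_trL (T : Matrix (Fin d2) (Fin d2) ℂ)
    (ρ : Matrix (Fin d1 × Fin d2) (Fin d1 × Fin d2) ℂ) :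
    ev ((1 : Matrix (Fin d1) (Fin d1) ℂ) ⊗ₖ T) ρ = ev T (trL ρ) := by
  unfold ev
  congr 1
  simp only [Matrix.trace, Matrix.diag, Matrix.mul_apply, Fintype.sum_prod_type, trL,
    Matrix.kroneckerMap_apply, Matrix.of_apply, Finset.mul_sum, Matrix.one_apply]
  rw [Finset.sum_comm]
  refine Finset.sum_congr rfl fun i _ => ?_
  rw [Finset.sum_comm (γ := Fin d2)]
  refine Finset.sum_congr rfl fun j _ => ?_
  rw [Finset.sum_comm]
  simp

theorem isDensity_trR {ρ : Matrix (Fin d1 × Fin d2) (Fin d1 × Fin d2) ℂ} (h : IsDensity ρ) :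
    IsDensity (trR ρ) := by
  constructor
  · have e : trR ρ = ∑ b, ρ.submatrix (fun a => (a, b)) (fun a => (a, b)) := by
      ext a a'; simp [trR, Matrix.sum_apply]
    rw [e]
    exact Matrix.posSemidef_sum _ fun b _ => h.1.submatrix _
  · rw [← h.2]
    simp [Matrix.trace, trR, Fintype.sum_prod_type]

theorem isDensity_trL {ρ : Matrix (Fin d1 × Fin d2) (Fin d1 × Fin d2) ℂ} (h : IsDensity ρ) :
    IsDensity (trL ρ) := by
  constructor
  · have e : trL ρ = ∑ b, ρ.submatrix (fun a => (b, a)) (fun a => (b, a)) := by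
      ext a a'; simp [trL, Matrix.sum_apply]
    rw [e]
    exact Matrix.posSemidef_sum _ fun b _ => h.1.submatrix _
  · rw [← h.2]
    simp only [Matrix.trace, trL, Fintype.sum_prod_type, Matrix.diag, Matrix.of_apply]
    rw [Finset.sum_comm]

/-- Union bound for two receivers measuring their own systems. -/
theorem ev_kron_ge {S : Matrix (Fin d1) (Fin d1) ℂ} {T : Matrix (Fin d2) (Fin d2) ℂ}
    (hS : IsPOVMElem S) (hT : IsPOVMElem T)
    {ρ : Matrix (Fin d1 × Fin d2) (Fin d1 × Fin d2) ℂ} (hρ : IsDensity ρ) :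
    0 ≤ 1 - ev (S ⊗ₖ T) ρ ∧ 1 - ev (S ⊗ₖ T) ρ ≤ 1 ∧
    1 - ev (S ⊗ₖ T) ρ ≤ ev (1 - S) (trR ρ) + ev (1 - T) (trL ρ) := by
  have a0 := ev_nonneg (hS.1.kronecker hT.1) hρ.1
  have a1 := ev_nonneg (hS.1.kronecker hT.2) hρ.1
  have a2 := ev_nonneg (hS.2.kronecker Matrix.PosSemidef.one (n := Fin d1) (m := Fin d2)) hρ.1
  have a3 := ev_nonneg (hS.2.kronecker hT.2) hρ.1
  have e1 : S ⊗ₖ (1 - T) = S ⊗ₖ (1 : Matrix (Fin d2) (Fin d2) ℂ) - S ⊗ₖ T := by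
    rw [sub_eq_add_neg, Matrix.kronecker_add]; ext; simp [sub_eq_add_neg]
  have e2 : (1 - S) ⊗ₖ (1 : Matrix (Fin d2) (Fin d2) ℂ) = 1 - S ⊗ₖ (1 : Matrix (Fin d2) (Fin d2) ℂ) := by
    rw [sub_eq_add_neg, Matrix.add_kronecker, Matrix.one_kronecker_one]; ext; simp [sub_eq_add_neg]
  have e3 : (1 - S) ⊗ₖ (1 - T) = (1 : Matrix (Fin d1) (Fin d1) ℂ) ⊗ₖ (1 - T) - S ⊗ₖ (1 - T) := by
    rw [sub_eq_add_neg 1 S, Matrix.add_kronecker]; ext; simp [sub_eq_add_neg]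
  rw [e1, ev_sub_left] at a1
  rw [e2, ev_sub_left, ev_one hρ] at a2
  rw [e3, ev_sub_left, e1, ev_sub_left, ev_trL] at a3
  rw [ev_sub_left, ev_one (isDensity_trR hρ), ← ev_trR]
  refine ⟨by linarith, by linarith, by linarith⟩

end Bipartite

/-- A test achieving `d` in the definition of `DH` for two cq-states yields one effect for each
classical letter (its diagonal blocks). -/
theorem exists_tests {U : Type*} [Fintype U] [DecidableEq U] {n : ℕ}
    (α β : U → Matrix (Fin n) (Fin n) ℂ) {ε d : ℝ}
    (h : ∃ E : Matrix (U × Fin n) (U × Fin n) ℂ, IsPOVMElem E ∧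
      1 - ε ≤ ((E * cqState α).trace).re ∧ ((E * cqState β).trace).re ≤ (2 : ℝ) ^ (-d)) :
    ∃ E : U → Matrix (Fin n) (Fin n) ℂ, (∀ u, IsPOVMElem (E u)) ∧
      1 - ε ≤ ∑ u, ev (E u) (α u) ∧ ∑ u, ev (E u) (β u) ≤ (2 : ℝ) ^ (-d) := by
  obtain ⟨E, hE, h1, h2⟩ := h
  have key : ∀ γ : U → Matrix (Fin n) (Fin n) ℂ, ((E * cqState γ).trace).re
      = ∑ u, ev (E.submatrix (fun i => (u, i)) (fun i => (u, i))) (γ u) := by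
    intro γ
    unfold ev
    rw [← Complex.re_sum]
    congr 1
    simp only [Matrix.trace, Matrix.diag, Matrix.mul_apply, Fintype.sum_prod_type, cqState,
      Matrix.of_apply, Matrix.submatrix_apply]
    refine Finset.sum_congr rfl fun u _ => Finset.sum_congr rfl fun i _ => ?_
    rw [Finset.sum_eq_single u (fun v _ hv => by simp [hv]) (by simp)]
    simp
  refine ⟨fun u => E.submatrix (fun i => (u, i)) (fun i => (u, i)), fun u => ⟨hE.1.submatrix _, ?_⟩,
    (key α) ▸ h1, (key β) ▸ h2⟩
  have := hE.2.submatrix (fun i : Fin n => (u, i))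
  convert this using 1
  ext i j
  simp [Matrix.one_apply]

/-! ### Random coding with independent blocks -/

section IID

variable {K Ω : Type*} [Fintype K] [DecidableEq K] [Fintype Ω]

/-- The weight of the family `f` when its entries are drawn independently from `q`. -/
def iid (q : Ω → ℝ) (f : K → Ω) : ℝ := ∏ k, q (f k)

theorem iid_nonneg {q : Ω → ℝ} (hq : IsProbDist q) (f : K → Ω) : 0 ≤ iid q f :=
  Finset.prod_nonneg fun _ _ => hq.1 _

theorem sum_prod_apply (h : K → Ω → ℝ) : ∑ f : K → Ω, ∏ k, h k (f k) = ∏ k, ∑ a, h k a := by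
  rw [Finset.prod_univ_sum, Fintype.piFinset_univ]

theorem iid_sum {q : Ω → ℝ} (hq : IsProbDist q) : ∑ f : K → Ω, iid q f = 1 := by
  unfold iid
  rw [sum_prod_apply fun _ => q]
  simp [hq.2]

theorem iid_expect_one {q : Ω → ℝ} (hq : IsProbDist q) (i : K) (g : Ω → ℝ) :
    ∑ f : K → Ω, iid q f * g (f i) = ∑ a, q a * g a := by
  have h : ∀ f : K → Ω, iid q f * g (f i) = ∏ k, q (f k) * (if k = i then g (f k) else 1) := by
    intro f
    rw [Finset.prod_mul_distrib, Finset.prod_ite_eq' Finset.univ i fun k => g (f k)]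
    simp [iid]
  simp_rw [h]
  rw [sum_prod_apply fun k a => q a * (if k = i then g a else 1), Finset.prod_eq_single i]
  · simp
  · intro k _ hk
    simp [hk, hq.2]
  · simp

theorem iid_expect_mul {q : Ω → ℝ} (hq : IsProbDist q) {i j : K} (hij : i ≠ j) (g h : Ω → ℝ) :
    ∑ f : K → Ω, iid q f * (g (f i) * h (f j)) = (∑ a, q a * g a) * ∑ b, q b * h b := by
  have e : ∀ f : K → Ω, iid q f * (g (f i) * h (f j)) =
      ∏ k, q (f k) * ((if k = i then g (f k) else 1) * (if k = j then h (f k) else 1)) := by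
    intro f
    rw [Finset.prod_mul_distrib, Finset.prod_mul_distrib,
      Finset.prod_ite_eq' Finset.univ i fun k => g (f k),
      Finset.prod_ite_eq' Finset.univ j fun k => h (f k)]
    simp [iid]
  simp_rw [e]
  rw [sum_prod_apply fun k a => q a * ((if k = i then g a else 1) * (if k = j then h a else 1)),
    Finset.prod_eq_mul i j hij]
  · simp [hij, hij.symm]
  · intro k _ hk
    simp [hk.1, hk.2, hq.2]
  · simp
  · simp

theorem iid_expect_two {q : Ω → ℝ} (hq : IsProbDist q) {i j : K} (hij : i ≠ j)
    (g : Ω → Ω → ℝ) :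
    ∑ f : K → Ω, iid q f * g (f i) (f j) = ∑ a, q a * ∑ b, q b * g a b := by
  classical
  have e : ∀ f : K → Ω, iid q f * g (f i) (f j) =
      ∑ a, iid q f * ((if f i = a then 1 else 0) * g a (f j)) := by
    intro f; simp
  simp_rw [e]
  rw [Finset.sum_comm]
  refine Finset.sum_congr rfl fun a _ => ?_
  rw [iid_expect_mul hq hij (fun x => if x = a then 1 else 0) (g a)]
  simp

end IID

/-- Random-coding bound for one receiver. The blocks `c m` of the codebook are i.i.d. with law `μ`;
the tests `E` separate the blocks, the tests `F` separate the codewords inside a block. -/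
theorem receiver {M N X O : Type*} [Fintype M] [Fintype N] [Fintype X]
    [DecidableEq M] [DecidableEq N] [Fintype O] {d : ℕ}
    {μ : X → ℝ} (hμ : IsProbDist μ) (E F : X → N → Matrix (Fin d) (Fin d) ℂ)
    (hE : ∀ x n, IsPOVMElem (E x n)) (hF : ∀ x n, IsPOVMElem (F x n)) {δ : ℝ} (hδ : 0 < δ) :
    ∃ Λ : (M → X) → M → N → Matrix (Fin d) (Fin d) ℂ, (∀ c m n, (Λ c m n).PosSemidef) ∧
      (∀ c, (1 - ∑ m, ∑ n, Λ c m n).PosSemidef) ∧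
      ∀ (m : M) (w : X → O → ℝ) (n : O → N) (σ : X → O → Matrix (Fin d) (Fin d) ℂ),
        (∀ x o, 0 ≤ w x o) → (∀ x o, IsDensity (σ x o)) →
        ∑ c : M → X, iid μ c * ∑ o, w (c m) o * ev (1 - Λ c m (n o)) (σ (c m) o) ≤
          (∑ x, μ x * ∑ o, w x o * (6 * ev (1 - E x (n o)) (σ x o)
            + 4 * ev (1 - F x (n o)) (σ x o)
            + 8 * ∑ n' ∈ Finset.univ.erase (n o), ev (F x n') (σ x o) + 26 * δ))
          + 12 / δ * (Fintype.card M *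
            ∑ x, μ x * ∑ x', μ x' * ∑ o, w x o * ∑ n', ev (E x' n') (σ x o)) := by
  choose Λ h0 h1 h2 using fun c : M → X =>
    exists_decoder_matrix (fun m => E (c m)) (fun m => F (c m)) (fun m => hE (c m))
      (fun m => hF (c m)) hδ
  refine ⟨Λ, h0, h1, fun m w n σ hw hσ => ?_⟩
  set a : X → ℝ := fun x => ∑ o, w x o * (6 * ev (1 - E x (n o)) (σ x o)
            + 4 * ev (1 - F x (n o)) (σ x o)
            + 8 * ∑ n' ∈ Finset.univ.erase (n o), ev (F x n') (σ x o) + 26 * δ) with ha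
  set b : X → X → ℝ := fun x x' => ∑ o, w x o * ∑ n', ev (E x' n') (σ x o) with hb
  have hb0 : ∀ x x', 0 ≤ b x x' := fun x x' => Finset.sum_nonneg fun o _ =>
    mul_nonneg (hw x o) (Finset.sum_nonneg fun n' _ => ev_nonneg (hE x' n').1 (hσ x o).1)
  have hpt : ∀ c : M → X, ∑ o, w (c m) o * ev (1 - Λ c m (n o)) (σ (c m) o) ≤
      a (c m) + 12 / δ * ∑ m' ∈ Finset.univ.erase m, b (c m) (c m') := by
    intro c
    have e : ∑ m' ∈ Finset.univ.erase m, b (c m) (c m') =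
        ∑ o, w (c m) o * ∑ m' ∈ Finset.univ.erase m, ∑ n', ev (E (c m') n') (σ (c m) o) := by
      simp only [hb, Finset.mul_sum]
      rw [Finset.sum_comm]
    rw [e, Finset.mul_sum, ha, ← Finset.sum_add_distrib]
    refine Finset.sum_le_sum fun o _ => ?_
    have := mul_le_mul_of_nonneg_left (h2 c m (n o) (σ (c m) o) (hσ _ _)) (hw (c m) o)
    linarith
  have hsum : ∑ c : M → X, iid μ c * ∑ o, w (c m) o * ev (1 - Λ c m (n o)) (σ (c m) o) ≤
      ∑ c : M → X, iid μ c * (a (c m) + 12 / δ * ∑ m' ∈ Finset.univ.erase m, b (c m) (c m')) :=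
    Finset.sum_le_sum fun c _ => mul_le_mul_of_nonneg_left (hpt c) (iid_nonneg hμ c)
  refine hsum.trans ?_
  have e1 : ∑ c : M → X, iid μ c * (a (c m) + 12 / δ * ∑ m' ∈ Finset.univ.erase m, b (c m) (c m'))
      = ∑ c : M → X, iid μ c * a (c m)
        + 12 / δ * ∑ m' ∈ Finset.univ.erase m, ∑ c : M → X, iid μ c * b (c m) (c m') := by
    simp only [mul_add, Finset.sum_add_distrib, Finset.mul_sum]
    rw [Finset.sum_comm (s := Finset.univ.erase m)]
    congr 1
    refine Finset.sum_congr rfl fun c _ => Finset.sum_congr rfl fun m' _ => by ring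
  rw [e1, iid_expect_one hμ m a]
  have e2 : ∑ m' ∈ Finset.univ.erase m, ∑ c : M → X, iid μ c * b (c m) (c m') ≤
      Fintype.card M * ∑ x, μ x * ∑ x', μ x' * b x x' := by
    have hB : 0 ≤ ∑ x, μ x * ∑ x', μ x' * b x x' := Finset.sum_nonneg fun x _ =>
      mul_nonneg (hμ.1 x) (Finset.sum_nonneg fun x' _ => mul_nonneg (hμ.1 x') (hb0 x x'))
    rw [Finset.sum_congr rfl fun m' hm' =>
      iid_expect_two hμ (Finset.ne_of_mem_erase hm').symm b, Finset.sum_const, nsmul_eq_mul]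
    refine mul_le_mul_of_nonneg_right ?_ hB
    exact_mod_cast Finset.card_le_univ _
  exact add_le_add_right (mul_le_mul_of_nonneg_left e2 (by positivity)) _

/-- The best option is at most twice the weighted mean, up to the failure of the weights to
sum to one. -/
theorem min_le_weighted {O : Type*} [Fintype O] {w e : O → ℝ} (hw : ∀ o, 0 ≤ w o)
    {m : ℝ} (hm0 : 0 ≤ m) (hm1 : m ≤ 1) (hm : ∀ o, m ≤ e o) :
    m ≤ 2 * ∑ o, w o * e o + 4 * (1 - ∑ o, w o) ^ 2 := by
  have h : m * ∑ o, w o ≤ ∑ o, w o * e o := by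
    rw [Finset.mul_sum]
    exact Finset.sum_le_sum fun o _ => by
      have := mul_le_mul_of_nonneg_left (hm o) (hw o); linarith
  set S := ∑ o, w o
  have hS : 0 ≤ S := Finset.sum_nonneg fun o _ => hw o
  by_cases h2 : 1 / 2 ≤ S
  · nlinarith [sq_nonneg (1 - S)]
  · have := mul_nonneg hm0 hS
    nlinarith

/-- Random coding with independent blocks. A message triple `t` is assigned the block `blk t`;
inside a block `x` the encoder may send any `cw t x o`, and the weights `w t x o` are those
of the randomized choice of `o` against which its best choice is compared. -/
theorem exists_code_of_blocks {U0 U1 U2 : Type*}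
    {d1 d2 : ℕ} (ρ : U0 × U1 × U2 → Matrix (Fin d1 × Fin d2) (Fin d1 × Fin d2) ℂ)
    (hρ : ∀ u, IsDensity (ρ u)) {M0 M1 M2 : ℕ} (hM0 : 0 < M0) (hM1 : 0 < M1) (hM2 : 0 < M2)
    {M N1 N2 X O : Type*} [Fintype M] [Fintype N1] [Fintype N2] [Fintype X] [Fintype O]
    [DecidableEq M] [DecidableEq N1] [DecidableEq N2] [Nonempty O]
    {μ : X → ℝ} (hμ : IsProbDist μ)
    (E1 F1 : X → N1 → Matrix (Fin d1) (Fin d1) ℂ) (E2 F2 : X → N2 → Matrix (Fin d2) (Fin d2) ℂ)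
    (hE1 : ∀ x n, IsPOVMElem (E1 x n)) (hF1 : ∀ x n, IsPOVMElem (F1 x n))
    (hE2 : ∀ x n, IsPOVMElem (E2 x n)) (hF2 : ∀ x n, IsPOVMElem (F2 x n))
    (blk : Fin M0 × Fin M1 × Fin M2 → M)
    (n1 : Fin M0 × Fin M1 × Fin M2 → O → N1) (n2 : Fin M0 × Fin M1 × Fin M2 → O → N2)
    (dec1 : M → N1 → Fin M0 × Fin M1) (dec2 : M → N2 → Fin M0 × Fin M2)
    (hdec1 : ∀ t o, dec1 (blk t) (n1 t o) = (t.1, t.2.1))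
    (hdec2 : ∀ t o, dec2 (blk t) (n2 t o) = (t.1, t.2.2))
    (cw : Fin M0 × Fin M1 × Fin M2 → X → O → U0 × U1 × U2)
    (w : Fin M0 × Fin M1 × Fin M2 → X → O → ℝ) (hw : ∀ t x o, 0 ≤ w t x o)
    {δ : ℝ} (hδ : 0 < δ) {B s Δ : ℝ}
    (hB1 : ∀ t, (∑ x, μ x * ∑ o, w t x o * (6 * ev (1 - E1 x (n1 t o)) (trR (ρ (cw t x o)))
            + 4 * ev (1 - F1 x (n1 t o)) (trR (ρ (cw t x o)))
            + 8 * ∑ n' ∈ Finset.univ.erase (n1 t o), ev (F1 x n') (trR (ρ (cw t x o))) + 26 * δ))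
          + 12 / δ * (Fintype.card M * ∑ x, μ x * ∑ x', μ x' * ∑ o, w t x o *
            ∑ n', ev (E1 x' n') (trR (ρ (cw t x o)))) ≤ B)
    (hB2 : ∀ t, (∑ x, μ x * ∑ o, w t x o * (6 * ev (1 - E2 x (n2 t o)) (trL (ρ (cw t x o)))
            + 4 * ev (1 - F2 x (n2 t o)) (trL (ρ (cw t x o)))
            + 8 * ∑ n' ∈ Finset.univ.erase (n2 t o), ev (F2 x n') (trL (ρ (cw t x o))) + 26 * δ))
          + 12 / δ * (Fintype.card M * ∑ x, μ x * ∑ x', μ x' * ∑ o, w t x o *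
            ∑ n', ev (E2 x' n') (trL (ρ (cw t x o)))) ≤ B)
    (hs : ∀ t, ∑ x, μ x * (1 - ∑ o, w t x o) ^ 2 ≤ s) (hΔ : 4 * B + 4 * s ≤ Δ) :
    ExistsBroadcastCode ρ M0 M1 M2 Δ := by
  classical
  obtain ⟨Λ1, p1, q1, r1⟩ := receiver (M := M) (O := O) hμ E1 F1 hE1 hF1 hδ
  obtain ⟨Λ2, p2, q2, r2⟩ := receiver (M := M) (O := O) hμ E2 F2 hE2 hF2 hδ
  -- each receiver keeps only the messages it has to decode, by coarse-graining its measurement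
  let L1 : (M → X) → Fin M0 × Fin M1 → Matrix (Fin d1) (Fin d1) ℂ := fun c a =>
    ∑ m, ∑ n, if dec1 m n = a then Λ1 c m n else 0
  let L2 : (M → X) → Fin M0 × Fin M2 → Matrix (Fin d2) (Fin d2) ℂ := fun c a =>
    ∑ m, ∑ n, if dec2 m n = a then Λ2 c m n else 0
  have L1pos : ∀ c a, (L1 c a).PosSemidef := fun c a =>
    Matrix.posSemidef_sum _ fun m _ => Matrix.posSemidef_sum _ fun n _ => by
      split_ifs
      exacts [p1 c m n, Matrix.PosSemidef.zero]
  have L2pos : ∀ c a, (L2 c a).PosSemidef := fun c a =>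
    Matrix.posSemidef_sum _ fun m _ => Matrix.posSemidef_sum _ fun n _ => by
      split_ifs
      exacts [p2 c m n, Matrix.PosSemidef.zero]
  have L1sum : ∀ c, ∑ a, L1 c a = ∑ m, ∑ n, Λ1 c m n := by
    intro c
    simp only [L1]
    rw [Finset.sum_comm]
    refine Finset.sum_congr rfl fun m _ => ?_
    rw [Finset.sum_comm]
    simp
  have L2sum : ∀ c, ∑ a, L2 c a = ∑ m, ∑ n, Λ2 c m n := by
    intro c
    simp only [L2]
    rw [Finset.sum_comm]
    refine Finset.sum_congr rfl fun m _ => ?_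
    rw [Finset.sum_comm]
    simp
  have L1one : ∀ c, (1 - ∑ a, L1 c a).PosSemidef := fun c => by rw [L1sum]; exact q1 c
  have L2one : ∀ c, (1 - ∑ a, L2 c a).PosSemidef := fun c => by rw [L2sum]; exact q2 c
  have povm : ∀ {d : ℕ} {I : Type} [Fintype I] [DecidableEq I] (L : I → Matrix (Fin d) (Fin d) ℂ),
      (∀ a, (L a).PosSemidef) → (1 - ∑ a, L a).PosSemidef → ∀ a, IsPOVMElem (L a) := by
    intro d I _ _ L h0 h1 a
    refine ⟨h0 a, ?_⟩
    have e : 1 - L a = (1 - ∑ a, L a) + ∑ b ∈ Finset.univ.erase a, L b := by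
      rw [← Finset.add_sum_erase _ L (Finset.mem_univ a)]; abel
    rw [e]
    exact h1.add (Matrix.posSemidef_sum _ fun b _ => h0 b)
  have L1le : ∀ c m n, (L1 c (dec1 m n) - Λ1 c m n).PosSemidef := by
    intro c m n
    simp only [L1]
    rw [← Fintype.sum_prod_type' (f := fun m' n' => if dec1 m' n' = dec1 m n then Λ1 c m' n' else 0),
      ← Finset.add_sum_erase _ _ (Finset.mem_univ (m, n)), if_pos rfl, add_sub_cancel_left]
    refine Matrix.posSemidef_sum _ fun b _ => ?_
    split_ifs
    exacts [p1 c _ _, Matrix.PosSemidef.zero]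
  have L2le : ∀ c m n, (L2 c (dec2 m n) - Λ2 c m n).PosSemidef := by
    intro c m n
    simp only [L2]
    rw [← Fintype.sum_prod_type' (f := fun m' n' => if dec2 m' n' = dec2 m n then Λ2 c m' n' else 0),
      ← Finset.add_sum_erase _ _ (Finset.mem_univ (m, n)), if_pos rfl, add_sub_cancel_left]
    refine Matrix.posSemidef_sum _ fun b _ => ?_
    split_ifs
    exacts [p2 c _ _, Matrix.PosSemidef.zero]
  -- the error probability of option `o` for the message `t` in the code built from `c`
  let err : (M → X) → Fin M0 × Fin M1 × Fin M2 → O → ℝ := fun c t o =>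
    1 - ev (L1 c (t.1, t.2.1) ⊗ₖ L2 c (t.1, t.2.2)) (ρ (cw t (c (blk t)) o))
  have hopt : ∀ c t, ∃ o, ∀ o', err c t o ≤ err c t o' := fun c t =>
    let ⟨o, _, ho⟩ := Finset.exists_min_image Finset.univ (err c t) Finset.univ_nonempty
    ⟨o, fun o' => ho o' (Finset.mem_univ _)⟩
  choose op hop using hopt
  have herr : ∀ c t o, 0 ≤ err c t o ∧ err c t o ≤ 1 ∧ err c t o ≤
      ev (1 - Λ1 c (blk t) (n1 t o)) (trR (ρ (cw t (c (blk t)) o))) +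
      ev (1 - Λ2 c (blk t) (n2 t o)) (trL (ρ (cw t (c (blk t)) o))) := by
    intro c t o
    obtain ⟨a1, a2, a3⟩ := ev_kron_ge (povm _ (L1pos c) (L1one c) (t.1, t.2.1))
      (povm _ (L2pos c) (L2one c) (t.1, t.2.2)) (hρ (cw t (c (blk t)) o))
    refine ⟨a1, a2, a3.trans (add_le_add ?_ ?_)⟩
    · refine ev_mono ?_ (isDensity_trR (hρ _)).1
      rw [sub_sub_sub_cancel_left, ← hdec1 t o]
      exact L1le c _ _
    · refine ev_mono ?_ (isDensity_trL (hρ _)).1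
      rw [sub_sub_sub_cancel_left, ← hdec2 t o]
      exact L2le c _ _
  have hexp : ∀ t, ∑ c : M → X, iid μ c * err c t (op c t) ≤ Δ := by
    intro t
    have b1 := (r1 (blk t) (w t) (n1 t) (fun x o => trR (ρ (cw t x o))) (hw t)
      (fun x o => isDensity_trR (hρ _))).trans (hB1 t)
    have b2 := (r2 (blk t) (w t) (n2 t) (fun x o => trL (ρ (cw t x o))) (hw t)
      (fun x o => isDensity_trL (hρ _))).trans (hB2 t)
    have b3 := hs t
    rw [← iid_expect_one hμ (blk t)] at b3
    have hpt : ∀ c : M → X, iid μ c * err c t (op c t) ≤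
        2 * (iid μ c * ∑ o, w t (c (blk t)) o *
            ev (1 - Λ1 c (blk t) (n1 t o)) (trR (ρ (cw t (c (blk t)) o))))
        + 2 * (iid μ c * ∑ o, w t (c (blk t)) o *
            ev (1 - Λ2 c (blk t) (n2 t o)) (trL (ρ (cw t (c (blk t)) o))))
        + 4 * (iid μ c * (1 - ∑ o, w t (c (blk t)) o) ^ 2) := by
      intro c
      have h := min_le_weighted (w := w t (c (blk t))) (hw t _) (herr c t (op c t)).1
        (herr c t (op c t)).2.1 (fun o => (hop c t o).trans (herr c t o).2.2)
      simp only [mul_add, Finset.sum_add_distrib] at h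
      have := mul_le_mul_of_nonneg_left h (iid_nonneg hμ c)
      linarith
    have hsum := Finset.sum_le_sum fun c (_ : c ∈ Finset.univ) => hpt c
    simp only [Finset.sum_add_distrib, ← Finset.mul_sum] at hsum
    linarith
  have hMpos : (0 : ℝ) < M0 * M1 * M2 := by positivity
  have hcard : (Fintype.card (Fin M0 × Fin M1 × Fin M2) : ℝ) = M0 * M1 * M2 := by
    simp [mul_assoc]
  -- some codebook is at least as good as the average one
  obtain ⟨c, hc⟩ : ∃ c : M → X, ∑ t, err c t (op c t) ≤ (M0 * M1 * M2) * Δ := by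
    by_contra! hcon
    have h1 : ∑ t, ∑ c : M → X, iid μ c * err c t (op c t) ≤ (M0 * M1 * M2) * Δ := by
      refine (Finset.sum_le_sum fun t _ => hexp t).trans ?_
      rw [Finset.sum_const, nsmul_eq_mul, Finset.card_univ, hcard]
    rw [Finset.sum_comm] at h1
    simp only [← Finset.mul_sum] at h1
    have hone := iid_sum (K := M) hμ
    obtain ⟨c0, hc0⟩ : ∃ c : M → X, 0 < iid μ c := by
      by_contra! hno
      have := Finset.sum_nonpos fun c (_ : c ∈ Finset.univ) => hno c
      linarith
    have h2 : ∑ c : M → X, iid μ c * ((M0 * M1 * M2) * Δ) <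
        ∑ c : M → X, iid μ c * ∑ t, err c t (op c t) :=
      Finset.sum_lt_sum (fun c _ => mul_le_mul_of_nonneg_left (hcon c).le (iid_nonneg hμ c))
        ⟨c0, Finset.mem_univ _, mul_lt_mul_of_pos_left (hcon c0) hc0⟩
    rw [← Finset.sum_mul, hone, one_mul] at h2
    linarith
  refine ⟨fun t => cw t (c (blk t)) (op c t), L1 c, L2 c, L1pos c, L1one c, L2pos c, L2one c, ?_⟩
  have e : ∑ t, err c t (op c t) = M0 * M1 * M2 - ∑ t : Fin M0 × Fin M1 × Fin M2,
      (((L1 c (t.1, t.2.1) ⊗ₖ L2 c (t.1, t.2.2)) * ρ (cw t (c (blk t)) (op c t))).trace).re := by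
    simp only [err, Finset.sum_sub_distrib, Finset.sum_const, nsmul_eq_mul, Finset.card_univ, hcard,
      mul_one]
    rfl
  rw [e] at hc
  rw [inv_mul_eq_div, le_div_iff₀ hMpos]
  linarith

/-! ### Moments of the superposition codebook -/

/-- The error bound of one receiver, from the expectations of its summands for each fixed
option `o` of the encoder. -/
theorem block_bound {X O N : Type*} [Fintype X] [Fintype O] [Nonempty O] [Fintype N]
    [DecidableEq N] {μ : X → ℝ} (w α β : X → O → ℝ) (γ : X → O → N → ℝ)
    (κ : X → X → O → N → ℝ) (n : O → N) {ε f e δ m : ℝ} (hm : 0 ≤ m) (hδ : 0 < δ)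
    (h1 : ∀ o, ∑ x, μ x * (w x o * α x o) ≤ ε) (h2 : ∀ o, ∑ x, μ x * (w x o * β x o) ≤ ε)
    (h3 : ∀ o, ∀ n' ∈ Finset.univ.erase (n o), ∑ x, μ x * (w x o * γ x o n') ≤ f)
    (h4 : ∀ o, ∑ x, μ x * w x o ≤ 1)
    (h5 : ∀ o n', ∑ x, μ x * ∑ x', μ x' * (w x o * κ x x' o n') ≤ e) :
    (∑ x, μ x * ∑ o, w x o / Fintype.card O * (6 * α x o + 4 * β x o
        + 8 * ∑ n' ∈ Finset.univ.erase (n o), γ x o n' + 26 * δ))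
      + 12 / δ * (m * ∑ x, μ x * ∑ x', μ x' * ∑ o, w x o / Fintype.card O * ∑ n', κ x x' o n')
      ≤ 10 * ε + 8 * ((Fintype.card N - 1) * f) + 26 * δ
        + 12 / δ * (m * (Fintype.card N * e)) := by
  have hO : (0 : ℝ) < Fintype.card O := by exact_mod_cast Fintype.card_pos
  have avg : ∀ (g : O → ℝ) (b : ℝ), (∀ o, g o ≤ b) → ∑ o, g o / Fintype.card O ≤ b := by
    intro g b hg
    rw [← Finset.sum_div, div_le_iff₀ hO]
    refine (Finset.sum_le_sum fun o _ => hg o).trans ?_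
    simp [mul_comm]
  have e1 : ∑ x, μ x * ∑ o, w x o / Fintype.card O * (6 * α x o + 4 * β x o
        + 8 * ∑ n' ∈ Finset.univ.erase (n o), γ x o n' + 26 * δ) =
      ∑ o, (6 * ∑ x, μ x * (w x o * α x o) + 4 * ∑ x, μ x * (w x o * β x o)
        + 8 * ∑ n' ∈ Finset.univ.erase (n o), ∑ x, μ x * (w x o * γ x o n')
        + 26 * δ * ∑ x, μ x * w x o) / Fintype.card O := by
    simp only [Finset.mul_sum]
    rw [Finset.sum_comm]
    refine Finset.sum_congr rfl fun o _ => ?_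
    rw [Finset.sum_comm (s := Finset.univ.erase (n o)), ← Finset.sum_add_distrib,
      ← Finset.sum_add_distrib, ← Finset.sum_add_distrib, Finset.sum_div]
    refine Finset.sum_congr rfl fun x _ => ?_
    have : ∑ i ∈ Finset.univ.erase (n o), 8 * (μ x * (w x o * γ x o i)) =
        μ x * w x o * ∑ i ∈ Finset.univ.erase (n o), 8 * γ x o i := by
      rw [Finset.mul_sum]; exact Finset.sum_congr rfl fun i _ => by ring
    rw [this]
    ring
  have e2 : ∑ x, μ x * ∑ x', μ x' * ∑ o, w x o / Fintype.card O * ∑ n', κ x x' o n' =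
      ∑ o, (∑ n', ∑ x, μ x * ∑ x', μ x' * (w x o * κ x x' o n')) / Fintype.card O := by
    simp only [Finset.mul_sum, Finset.sum_div]
    rw [Finset.sum_congr rfl fun x _ => Finset.sum_comm, Finset.sum_comm]
    refine Finset.sum_congr rfl fun o _ => ?_
    rw [Finset.sum_congr rfl fun x _ => Finset.sum_comm, Finset.sum_comm]
    refine Finset.sum_congr rfl fun n' _ => Finset.sum_congr rfl fun x _ =>
      Finset.sum_congr rfl fun x' _ => by ring
  rw [e1, e2]
  refine add_le_add (avg _ _ fun o => ?_) ?_
  · have h3' : ∑ n' ∈ Finset.univ.erase (n o), ∑ x, μ x * (w x o * γ x o n') ≤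
        (Fintype.card N - 1) * f := by
      refine (Finset.sum_le_sum (h3 o)).trans_eq ?_
      have : Nonempty N := ⟨n o⟩
      rw [Finset.sum_const, nsmul_eq_mul, Finset.card_erase_of_mem (Finset.mem_univ _),
        Finset.card_univ, Nat.cast_sub Fintype.card_pos, Nat.cast_one]
    have := mul_le_mul_of_nonneg_left (h4 o) (by positivity : 0 ≤ 26 * δ)
    linarith [h1 o, h2 o]
  · refine mul_le_mul_of_nonneg_left (mul_le_mul_of_nonneg_left (avg _ _ fun o => ?_) hm)
      (by positivity)
    refine (Finset.sum_le_sum fun n' _ => h5 o n').trans_eq ?_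
    simp

/-- Chebyshev-type bound for the average weight of the options, whose means are nearly one and whose
pairwise product moments are at most one. -/
theorem second_moment {X O : Type*} [Fintype X] [Fintype O] [Nonempty O] [DecidableEq O]
    {μ : X → ℝ} (hμ : IsProbDist μ) (w : X → O → ℝ) {ε W : ℝ}
    (h1 : ∀ o, 1 - ε ≤ ∑ x, μ x * w x o)
    (h2 : ∀ o o', o ≠ o' → ∑ x, μ x * (w x o * w x o') ≤ 1)
    (h3 : ∀ o, ∑ x, μ x * (w x o * w x o) ≤ W) (hW : 0 ≤ W) :
    ∑ x, μ x * (1 - ∑ o, w x o / Fintype.card O) ^ 2 ≤ 2 * ε + W / Fintype.card O := by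
  have hO : (0 : ℝ) < Fintype.card O := by exact_mod_cast Fintype.card_pos
  set k : ℝ := (Fintype.card O : ℝ) with hk
  have e : ∀ x, μ x * (1 - ∑ o, w x o / k) ^ 2 =
      μ x - 2 / k * ∑ o, μ x * w x o + 1 / k ^ 2 * ∑ o, ∑ o', μ x * (w x o * w x o') := by
    intro x
    simp only [← Finset.mul_sum, ← Finset.sum_mul, ← Finset.sum_div]
    field_simp
    ring
  rw [Finset.sum_congr rfl fun x _ => e x, Finset.sum_add_distrib, Finset.sum_sub_distrib, hμ.2,
    ← Finset.mul_sum (f := fun x => ∑ o, μ x * w x o),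
    ← Finset.mul_sum (f := fun x => ∑ o, ∑ o', μ x * (w x o * w x o')),
    Finset.sum_comm, Finset.sum_comm (f := fun x o => ∑ o', μ x * (w x o * w x o'))]
  have a1 : k * (1 - ε) ≤ ∑ o, ∑ x, μ x * w x o := by
    refine le_trans (le_of_eq ?_) (Finset.sum_le_sum fun o _ => h1 o)
    simp [hk, mul_sub]
  have a2 : ∑ o, ∑ x, ∑ o', μ x * (w x o * w x o') ≤ k * (k + W) := by
    have : ∀ o, ∑ x, ∑ o', μ x * (w x o * w x o') ≤ k + W := by
      intro o
      rw [Finset.sum_comm, ← Finset.add_sum_erase _ _ (Finset.mem_univ o)]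
      have : ∑ o' ∈ Finset.univ.erase o, ∑ x, μ x * (w x o * w x o') ≤ k := by
        refine (Finset.sum_le_sum fun o' ho' => h2 o o' (Finset.ne_of_mem_erase ho').symm).trans ?_
        simp only [Finset.sum_const, nsmul_eq_mul, mul_one, hk]
        exact_mod_cast Finset.card_le_univ _
      linarith [h3 o]
    refine (Finset.sum_le_sum fun o _ => this o).trans_eq ?_
    simp [hk, mul_add]
  have b1 : 2 / k * (k * (1 - ε)) ≤ 2 / k * ∑ o, ∑ x, μ x * w x o :=
    mul_le_mul_of_nonneg_left a1 (by positivity)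
  have b2 := mul_le_mul_of_nonneg_left a2 (by positivity : 0 ≤ 1 / k ^ 2)
  have c1 : 2 / k * (k * (1 - ε)) = 2 - 2 * ε := by field_simp
  have c2 : 1 / k ^ 2 * (k * (k + W)) = 1 + W / k := by field_simp
  linarith

section Moments

variable {U0 U1 U2 N1 N2 : Type*} [Fintype U0] [Fintype U1] [Fintype U2] [Fintype N1] [Fintype N2]
  [DecidableEq N1] [DecidableEq N2]

/-- The law of a random block: a cloud centre drawn from `p0` and, given the centre `a`,
independent satellites drawn from `r1 a` for the first receiver and `r2 a` for the second. -/
def blockLaw (p0 : U0 → ℝ) (r1 : U0 → U1 → ℝ) (r2 : U0 → U2 → ℝ)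
    (x : U0 × (N1 → U1) × (N2 → U2)) : ℝ :=
  p0 x.1 * (iid (r1 x.1) x.2.1 * iid (r2 x.1) x.2.2)

variable {p0 : U0 → ℝ} {r1 : U0 → U1 → ℝ} {r2 : U0 → U2 → ℝ}

theorem blockLaw_expect (φ : U0 → (N1 → U1) → (N2 → U2) → ℝ) :
    ∑ x : U0 × (N1 → U1) × (N2 → U2), blockLaw p0 r1 r2 x * φ x.1 x.2.1 x.2.2 =
      ∑ a, p0 a * ∑ f, iid (r1 a) f * ∑ g, iid (r2 a) g * φ a f g := by
  simp only [Fintype.sum_prod_type, blockLaw, Finset.mul_sum]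
  refine Finset.sum_congr rfl fun a _ => Finset.sum_congr rfl fun f _ =>
    Finset.sum_congr rfl fun g _ => by ring

theorem blockLaw_expect_swap (φ : U0 → (N1 → U1) → (N2 → U2) → ℝ) :
    ∑ x : U0 × (N1 → U1) × (N2 → U2), blockLaw p0 r1 r2 x * φ x.1 x.2.1 x.2.2 =
      ∑ a, p0 a * ∑ g, iid (r2 a) g * ∑ f, iid (r1 a) f * φ a f g := by
  rw [blockLaw_expect]
  refine Finset.sum_congr rfl fun a _ => ?_
  simp only [Finset.mul_sum]
  rw [Finset.sum_comm]
  refine Finset.sum_congr rfl fun f _ => Finset.sum_congr rfl fun g _ => by ring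

theorem isProbDist_blockLaw (h0 : IsProbDist p0) (h1 : ∀ a, IsProbDist (r1 a))
    (h2 : ∀ a, IsProbDist (r2 a)) :
    IsProbDist (blockLaw p0 r1 r2 : U0 × (N1 → U1) × (N2 → U2) → ℝ) := by
  constructor
  · exact fun x => mul_nonneg (h0.1 _) (mul_nonneg (iid_nonneg (h1 _) _) (iid_nonneg (h2 _) _))
  · have := blockLaw_expect (p0 := p0) (r1 := r1) (r2 := r2) (N1 := N1) (N2 := N2)
      (fun _ _ _ => 1)
    simpa [iid_sum (h1 _), iid_sum (h2 _), h0.2] using this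

theorem blockLaw_one (h1 : ∀ a, IsProbDist (r1 a)) (h2 : ∀ a, IsProbDist (r2 a))
    (n1 : N1) (n2 : N2) (φ : U0 → U1 → U2 → ℝ) :
    ∑ x : U0 × (N1 → U1) × (N2 → U2), blockLaw p0 r1 r2 x * φ x.1 (x.2.1 n1) (x.2.2 n2) =
      ∑ a, p0 a * ∑ b, r1 a b * ∑ c, r2 a c * φ a b c := by
  rw [blockLaw_expect fun a f g => φ a (f n1) (g n2)]
  refine Finset.sum_congr rfl fun a _ => ?_
  simp only [iid_expect_one (h2 a) n2 (φ a _)]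
  rw [iid_expect_one (h1 a) n1 fun b => ∑ c, r2 a c * φ a b c]

/-- Moments of a codeword pair together with another satellite of the first receiver. -/
theorem blockLaw_two_left (h1 : ∀ a, IsProbDist (r1 a)) (h2 : ∀ a, IsProbDist (r2 a))
    {n1 n1' : N1} (hn : n1 ≠ n1') (n2 : N2) (φ : U0 → U1 → U2 → U1 → ℝ) :
    ∑ x : U0 × (N1 → U1) × (N2 → U2), blockLaw p0 r1 r2 x *
        φ x.1 (x.2.1 n1) (x.2.2 n2) (x.2.1 n1') =
      ∑ a, p0 a * ∑ b, r1 a b * ∑ b', r1 a b' * ∑ c, r2 a c * φ a b c b' := by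
  rw [blockLaw_expect fun a f g => φ a (f n1) (g n2) (f n1')]
  refine Finset.sum_congr rfl fun a _ => ?_
  have e : ∀ f : N1 → U1, ∑ g : N2 → U2, iid (r2 a) g * φ a (f n1) (g n2) (f n1') =
      ∑ c, r2 a c * φ a (f n1) c (f n1') := fun f =>
    iid_expect_one (h2 a) n2 fun c => φ a (f n1) c (f n1')
  simp only [e]
  rw [iid_expect_two (h1 a) hn fun b b' => ∑ c, r2 a c * φ a b c b']

/-- Moments of a codeword pair together with another satellite of the second receiver. -/
theorem blockLaw_two_right (h1 : ∀ a, IsProbDist (r1 a)) (h2 : ∀ a, IsProbDist (r2 a))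
    {n2 n2' : N2} (hn : n2 ≠ n2') (n1 : N1) (φ : U0 → U1 → U2 → U2 → ℝ) :
    ∑ x : U0 × (N1 → U1) × (N2 → U2), blockLaw p0 r1 r2 x *
        φ x.1 (x.2.1 n1) (x.2.2 n2) (x.2.2 n2') =
      ∑ a, p0 a * ∑ c, r2 a c * ∑ c', r2 a c' * ∑ b, r1 a b * φ a b c c' := by
  rw [blockLaw_expect_swap fun a f g => φ a (f n1) (g n2) (g n2')]
  refine Finset.sum_congr rfl fun a _ => ?_
  have e : ∀ g : N2 → U2, ∑ f : N1 → U1, iid (r1 a) f * φ a (f n1) (g n2) (g n2') =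
      ∑ b, r1 a b * φ a b (g n2) (g n2') := fun g =>
    iid_expect_one (h1 a) n1 fun b => φ a b (g n2) (g n2')
  simp only [e]
  rw [iid_expect_two (h2 a) hn fun c c' => ∑ b, r1 a b * φ a b c c']

/-- The product moment of the weights of two distinct options is at most one: given the centre and
the satellites of one receiver, the two weights are independent with means at most one. -/
theorem blockLaw_mul_le (h0 : IsProbDist p0) (h1 : ∀ a, IsProbDist (r1 a))
    (h2 : ∀ a, IsProbDist (r2 a)) {w0 : U0 → U1 → U2 → ℝ} (hw : ∀ a b c, 0 ≤ w0 a b c)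
    (hwl : ∀ a c, ∑ b, r1 a b * w0 a b c ≤ 1) (hwr : ∀ a b, ∑ c, r2 a c * w0 a b c ≤ 1)
    {n1 n1' : N1} {n2 n2' : N2} (hn : n1 ≠ n1' ∨ n2 ≠ n2') :
    ∑ x : U0 × (N1 → U1) × (N2 → U2), blockLaw p0 r1 r2 x *
        (w0 x.1 (x.2.1 n1) (x.2.2 n2) * w0 x.1 (x.2.1 n1') (x.2.2 n2')) ≤ 1 := by
  have hl0 : ∀ a c, 0 ≤ ∑ b, r1 a b * w0 a b c := fun a c =>
    Finset.sum_nonneg fun b _ => mul_nonneg ((h1 a).1 b) (hw _ _ _)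
  have hr0 : ∀ a b, 0 ≤ ∑ c, r2 a c * w0 a b c := fun a b =>
    Finset.sum_nonneg fun c _ => mul_nonneg ((h2 a).1 c) (hw _ _ _)
  rcases hn with hn | hn
  · rw [blockLaw_expect_swap fun a f g => w0 a (f n1) (g n2) * w0 a (f n1') (g n2')]
    have : ∀ a, ∑ g : N2 → U2, iid (r2 a) g * ∑ f : N1 → U1, iid (r1 a) f *
        (w0 a (f n1) (g n2) * w0 a (f n1') (g n2')) ≤ 1 := by
      intro a
      have hq : IsProbDist (iid (r2 a) : (N2 → U2) → ℝ) := ⟨iid_nonneg (h2 a), iid_sum (h2 a)⟩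
      have h : ∀ g : N2 → U2, ∑ f : N1 → U1, iid (r1 a) f *
          (w0 a (f n1) (g n2) * w0 a (f n1') (g n2')) ≤ 1 := by
        intro g
        rw [iid_expect_mul (h1 a) hn (fun b => w0 a b (g n2)) fun b => w0 a b (g n2')]
        exact mul_le_one₀ (hwl _ _) (hl0 _ _) (hwl _ _)
      refine (Finset.sum_le_sum fun g _ => mul_le_mul_of_nonneg_left (h g) (hq.1 g)).trans ?_
      simp [hq.2]
    refine (Finset.sum_le_sum fun a _ => mul_le_mul_of_nonneg_left (this a) (h0.1 a)).trans ?_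
    simp [h0.2]
  · rw [blockLaw_expect fun a f g => w0 a (f n1) (g n2) * w0 a (f n1') (g n2')]
    have : ∀ a, ∑ f : N1 → U1, iid (r1 a) f * ∑ g : N2 → U2, iid (r2 a) g *
        (w0 a (f n1) (g n2) * w0 a (f n1') (g n2')) ≤ 1 := by
      intro a
      have hq : IsProbDist (iid (r1 a) : (N1 → U1) → ℝ) := ⟨iid_nonneg (h1 a), iid_sum (h1 a)⟩
      have h : ∀ f : N1 → U1, ∑ g : N2 → U2, iid (r2 a) g *
          (w0 a (f n1) (g n2) * w0 a (f n1') (g n2')) ≤ 1 := by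
        intro f
        rw [iid_expect_mul (h2 a) hn (fun c => w0 a (f n1) c) fun c => w0 a (f n1') c]
        exact mul_le_one₀ (hwr _ _) (hr0 _ _) (hwr _ _)
      refine (Finset.sum_le_sum fun g _ => mul_le_mul_of_nonneg_left (h g) (hq.1 g)).trans ?_
      simp [hq.2]
    refine (Finset.sum_le_sum fun a _ => mul_le_mul_of_nonneg_left (this a) (h0.1 a)).trans ?_
    simp [h0.2]

end Moments

/-! ### The superposition code and the common code -/

section Scheme

variable {U0 U1 U2 : Type*} [Fintype U0] [Fintype U1] [Fintype U2] {d1 d2 : ℕ}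

/-- A joint law factors through a conditional law; where the marginal vanishes the conditional law
is arbitrary. -/
theorem exists_conditional {A B : Type*} [Fintype A] [Fintype B] [Nonempty B] {P : A → B → ℝ}
    (hP : ∀ a b, 0 ≤ P a b) :
    ∃ r : A → B → ℝ, (∀ a, IsProbDist (r a)) ∧ ∀ a b, P a b = (∑ b, P a b) * r a b := by
  classical
  obtain ⟨b0⟩ := ‹Nonempty B›
  refine ⟨fun a b => if ∑ b, P a b = 0 then (if b = b0 then 1 else 0) else P a b / ∑ b, P a b,
    fun a => ⟨fun b => ?_, ?_⟩, fun a b => ?_⟩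
  · dsimp only
    split_ifs
    exacts [zero_le_one, le_rfl, div_nonneg (hP a b) (Finset.sum_nonneg fun b _ => hP a b)]
  · by_cases h : ∑ b, P a b = 0
    · simp [h]
    · simp only [h, if_false]
      rw [← Finset.sum_div, div_self h]
  · by_cases h : ∑ b, P a b = 0
    · have := (Finset.sum_eq_zero_iff_of_nonneg fun b _ => hP a b).1 h b (Finset.mem_univ _)
      simp [h, this]
    · simp only [h, if_false]
      field_simp

/-- The likelihood ratio `w0` of the smoothed law `P'` against the law under which `U₁` and `U₂` are
conditionally independent given `U₀`, with conditional laws `r1` and `r2`. It is bounded by `2 ^ t`,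
it turns the independent law into one dominated by `P`, and only `ε` of the mass is lost. Its
conditional means are at most one because the marginals of `P'` are dominated by those of `P`. -/
theorem exists_weights {P P' : U0 × U1 × U2 → ℝ} (hP : IsProbDist P)
    (hP' : ∀ u, 0 ≤ P' u ∧ P' u ≤ P u) {ε t : ℝ} (hd : l1dist P P' ≤ ε)
    (ht : ∀ u : U0 × U1 × U2, P' u ≤ (2 : ℝ) ^ t *
      ((∑ b, P (u.1, u.2.1, b)) * (∑ a, P (u.1, a, u.2.2)) / (∑ a, ∑ b, P (u.1, a, b)))) :
    ∃ (r1 : U0 → U1 → ℝ) (r2 : U0 → U2 → ℝ) (w0 : U0 → U1 → U2 → ℝ),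
      (∀ a, IsProbDist (r1 a)) ∧ (∀ a, IsProbDist (r2 a)) ∧
      (∀ a b, ∑ c, P (a, b, c) = (∑ b, ∑ c, P (a, b, c)) * r1 a b) ∧
      (∀ a c, ∑ b, P (a, b, c) = (∑ b, ∑ c, P (a, b, c)) * r2 a c) ∧
      (∀ a b c, 0 ≤ w0 a b c) ∧ (∀ a b c, w0 a b c ≤ 2 ^ t) ∧
      (∀ a c, ∑ b, r1 a b * w0 a b c ≤ 1) ∧ (∀ a b, ∑ c, r2 a c * w0 a b c ≤ 1) ∧
      (∀ a b c, (∑ b, ∑ c, P (a, b, c)) * r1 a b * r2 a c * w0 a b c ≤ P (a, b, c)) ∧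
      1 - ε ≤ ∑ a, ∑ b, ∑ c, (∑ b, ∑ c, P (a, b, c)) * r1 a b * r2 a c * w0 a b c := by
  have hne : Nonempty (U0 × U1 × U2) := by
    by_contra h
    rw [not_nonempty_iff] at h
    simpa using hP.2
  obtain ⟨⟨u0, u1, u2⟩⟩ := hne
  have : Nonempty U1 := ⟨u1⟩
  have : Nonempty U2 := ⟨u2⟩
  obtain ⟨r1, hr1, e1⟩ := exists_conditional (P := fun a b => ∑ c, P (a, b, c))
    fun a b => Finset.sum_nonneg fun c _ => hP.1 _
  obtain ⟨r2, hr2, e2⟩ := exists_conditional (P := fun a c => ∑ b, P (a, b, c))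
    fun a b => Finset.sum_nonneg fun c _ => hP.1 _
  have e2' : ∀ a c, ∑ b, P (a, b, c) = (∑ b, ∑ c, P (a, b, c)) * r2 a c := by
    intro a c
    rw [Finset.sum_comm]
    exact e2 a c
  set p0 : U0 → ℝ := fun a => ∑ b, ∑ c, P (a, b, c) with hp0
  have hp0n : ∀ a, 0 ≤ p0 a := fun a =>
    Finset.sum_nonneg fun b _ => Finset.sum_nonneg fun c _ => hP.1 _
  set Q : U0 → U1 → U2 → ℝ := fun a b c => p0 a * r1 a b * r2 a c with hQ
  have hQn : ∀ a b c, 0 ≤ Q a b c := fun a b c =>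
    mul_nonneg (mul_nonneg (hp0n a) ((hr1 a).1 b)) ((hr2 a).1 c)
  have ht' : ∀ a b c, P' (a, b, c) ≤ 2 ^ t * Q a b c := by
    intro a b c
    have h := ht (a, b, c)
    simp only [e1 a b, e2' a c] at h
    refine h.trans_eq ?_
    by_cases h0 : p0 a = 0
    · simp only [hp0] at h0
      simp [hQ, h0, hp0]
    · simp only [hQ, hp0] at h0 ⊢
      field_simp
  have h2t : (0 : ℝ) < 2 ^ t := by positivity
  have hw : ∀ a b c, Q a b c * (P' (a, b, c) / Q a b c) = P' (a, b, c) := by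
    intro a b c
    by_cases h0 : Q a b c = 0
    · have h := ht' a b c
      rw [h0, mul_zero] at h
      rw [h0, zero_mul, le_antisymm h (hP' _).1]
    · field_simp
  have hw0 : ∀ a b c, 0 ≤ P' (a, b, c) / Q a b c := fun a b c =>
    div_nonneg (hP' _).1 (hQn _ _ _)
  refine ⟨r1, r2, fun a b c => P' (a, b, c) / Q a b c, hr1, hr2, e1, e2', hw0,
    fun a b c => ?_, fun a c => ?_, fun a b => ?_, fun a b c => ?_, ?_⟩
  · exact div_le_of_le_mul₀ (hQn _ _ _) h2t.le (ht' a b c)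
  · by_cases h0 : p0 a * r2 a c = 0
    · have : ∀ b, Q a b c = 0 := fun b => by
        simp only [hQ]
        rw [mul_right_comm, h0, zero_mul]
      simp [this]
    · have hpos : 0 < p0 a * r2 a c :=
        lt_of_le_of_ne (mul_nonneg (hp0n a) ((hr2 a).1 c)) (Ne.symm h0)
      refine le_of_mul_le_mul_left ?_ hpos
      rw [mul_one, Finset.mul_sum]
      calc _ = ∑ b, P' (a, b, c) := Finset.sum_congr rfl fun b _ => by
            rw [← hw a b c]; simp only [hQ]; ring
        _ ≤ ∑ b, P (a, b, c) := Finset.sum_le_sum fun b _ => (hP' _).2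
        _ = _ := e2' a c
  · by_cases h0 : p0 a * r1 a b = 0
    · have : ∀ c, Q a b c = 0 := fun c => by
        simp only [hQ]
        rw [h0, zero_mul]
      simp [this]
    · have hpos : 0 < p0 a * r1 a b :=
        lt_of_le_of_ne (mul_nonneg (hp0n a) ((hr1 a).1 b)) (Ne.symm h0)
      refine le_of_mul_le_mul_left ?_ hpos
      rw [mul_one, Finset.mul_sum]
      calc _ = ∑ c, P' (a, b, c) := Finset.sum_congr rfl fun c _ => by
            rw [← hw a b c]; simp only [hQ]; ring
        _ ≤ ∑ c, P (a, b, c) := Finset.sum_le_sum fun b _ => (hP' _).2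
        _ = _ := e1 a b
  · exact (hw a b c).trans_le (hP' _).2
  · have h : ∑ a, ∑ b, ∑ c, Q a b c * (P' (a, b, c) / Q a b c) = ∑ u, P' u := by
      simp only [hw, Fintype.sum_prod_type]
    refine le_trans ?_ h.ge
    have h2 : ∑ u, P u - ∑ u, P' u ≤ ε := by
      rw [← Finset.sum_sub_distrib]
      exact (Finset.sum_le_sum fun u _ => le_abs_self _).trans hd
    rw [hP.2] at h2
    linarith

/-- Superposition code with rate splitting. The cloud index carries the common message and the parts
in `Fin C1`, `Fin C2` of the private messages; the satellites carry the parts in `Fin Q1`,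
`Fin Q2` and have `K1`, `K2` variants, among which the encoder looks for a jointly typical pair. -/
theorem superposition_code
    (ρ : U0 × U1 × U2 → Matrix (Fin d1 × Fin d2) (Fin d1 × Fin d2) ℂ)
    (hρ : ∀ u, IsDensity (ρ u)) {M0 M1 M2 : ℕ} (hM0 : 0 < M0) (hM1 : 0 < M1) (hM2 : 0 < M2)
    {P : U0 × U1 × U2 → ℝ}
    {p0 : U0 → ℝ} {r1 : U0 → U1 → ℝ} {r2 : U0 → U2 → ℝ} {w0 : U0 → U1 → U2 → ℝ}
    (hp0 : IsProbDist p0) (hr1 : ∀ a, IsProbDist (r1 a)) (hr2 : ∀ a, IsProbDist (r2 a))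
    (hw : ∀ a b c, 0 ≤ w0 a b c) {W ε : ℝ} (hW0 : 0 ≤ W) (hW : ∀ a b c, w0 a b c ≤ W)
    (hwl : ∀ a c, ∑ b, r1 a b * w0 a b c ≤ 1) (hwr : ∀ a b, ∑ c, r2 a c * w0 a b c ≤ 1)
    (hwP : ∀ a b c, p0 a * r1 a b * r2 a c * w0 a b c ≤ P (a, b, c)) (hPs : ∑ u, P u = 1)
    (hwε : 1 - ε ≤ ∑ a, ∑ b, ∑ c, p0 a * r1 a b * r2 a c * w0 a b c)
    {E1 F1 : U0 × U1 → Matrix (Fin d1) (Fin d1) ℂ} {E2 F2 : U0 × U2 → Matrix (Fin d2) (Fin d2) ℂ}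
    (hE1 : ∀ v, IsPOVMElem (E1 v)) (hF1 : ∀ v, IsPOVMElem (F1 v))
    (hE2 : ∀ v, IsPOVMElem (E2 v)) (hF2 : ∀ v, IsPOVMElem (F2 v))
    {e1 f1 e2 f2 : ℝ}
    (hE1a : ∑ u, P u * ev (1 - E1 (u.1, u.2.1)) (trR (ρ u)) ≤ ε)
    (hF1a : ∑ u, P u * ev (1 - F1 (u.1, u.2.1)) (trR (ρ u)) ≤ ε)
    (hE2a : ∑ u, P u * ev (1 - E2 (u.1, u.2.2)) (trL (ρ u)) ≤ ε)
    (hF2a : ∑ u, P u * ev (1 - F2 (u.1, u.2.2)) (trL (ρ u)) ≤ ε)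
    (hE1b : ∑ a, ∑ b, p0 a * r1 a b * ∑ u, P u * ev (E1 (a, b)) (trR (ρ u)) ≤ e1)
    (hF1b : ∑ a, ∑ b, r1 a b * ∑ b', ∑ c, P (a, b', c) * ev (F1 (a, b)) (trR (ρ (a, b', c))) ≤ f1)
    (hE2b : ∑ a, ∑ c, p0 a * r2 a c * ∑ u, P u * ev (E2 (a, c)) (trL (ρ u)) ≤ e2)
    (hF2b : ∑ a, ∑ c, r2 a c * ∑ b, ∑ c', P (a, b, c') * ev (F2 (a, c)) (trL (ρ (a, b, c'))) ≤ f2)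
    {C1 Q1 K1 C2 Q2 K2 : ℕ} (hC1 : M1 ≤ C1 * Q1) (hC2 : M2 ≤ C2 * Q2) (hK1 : 0 < K1)
    (hK2 : 0 < K2) {δ Δ : ℝ} (hδ : 0 < δ)
    (hW' : W ≤ ε * (K1 * K2))
    (he1 : M0 * C1 * C2 * (Q1 * K1 * e1) ≤ 16 * ε)
    (he2 : M0 * C1 * C2 * (Q2 * K2 * e2) ≤ 16 * ε)
    (hf1 : (Q1 * K1 - 1) * f1 ≤ 4 * ε) (hf2 : (Q2 * K2 - 1) * f2 ≤ 4 * ε)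
    (hΔ : 4 * (42 * ε + 26 * δ + 12 / δ * (16 * ε)) + 4 * (3 * ε) ≤ Δ) :
    ExistsBroadcastCode ρ M0 M1 M2 Δ := by
  classical
  obtain ⟨ι1⟩ : Nonempty (Fin M1 ↪ Fin C1 × Fin Q1) :=
    Function.Embedding.nonempty_of_card_le (by simpa using hC1)
  obtain ⟨ι2⟩ : Nonempty (Fin M2 ↪ Fin C2 × Fin Q2) :=
    Function.Embedding.nonempty_of_card_le (by simpa using hC2)
  have : Nonempty (Fin M1) := ⟨⟨0, hM1⟩⟩
  have : Nonempty (Fin M2) := ⟨⟨0, hM2⟩⟩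
  have : Nonempty (Fin K1 × Fin K2) := ⟨(⟨0, hK1⟩, ⟨0, hK2⟩)⟩
  have hinv1 : ∀ m, Function.invFun ι1 (ι1 m) = m := Function.leftInverse_invFun ι1.injective
  have hinv2 : ∀ m, Function.invFun ι2 (ι2 m) = m := Function.leftInverse_invFun ι2.injective
  have hμ := isProbDist_blockLaw (N1 := Fin Q1 × Fin K1) (N2 := Fin Q2 × Fin K2) hp0 hr1 hr2
  have hO : (0 : ℝ) < K1 * K2 := by positivity
  have hcO : (Fintype.card (Fin K1 × Fin K2) : ℝ) = K1 * K2 := by simp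
  have hcN1 : (Fintype.card (Fin Q1 × Fin K1) : ℝ) = Q1 * K1 := by simp
  have hcN2 : (Fintype.card (Fin Q2 × Fin K2) : ℝ) = Q2 * K2 := by simp
  have hcM : (Fintype.card (Fin M0 × Fin C1 × Fin C2) : ℝ) = M0 * C1 * C2 := by simp [mul_assoc]
  let X := U0 × (Fin Q1 × Fin K1 → U1) × (Fin Q2 × Fin K2 → U2)
  let n1 : Fin M0 × Fin M1 × Fin M2 → Fin K1 × Fin K2 → Fin Q1 × Fin K1 :=
    fun t o => ((ι1 t.2.1).2, o.1)
  let n2 : Fin M0 × Fin M1 × Fin M2 → Fin K1 × Fin K2 → Fin Q2 × Fin K2 :=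
    fun t o => ((ι2 t.2.2).2, o.2)
  let v : Fin M0 × Fin M1 × Fin M2 → X → Fin K1 × Fin K2 → ℝ := fun t x o =>
    w0 x.1 (x.2.1 (n1 t o)) (x.2.2 (n2 t o))
  let cw : Fin M0 × Fin M1 × Fin M2 → X → Fin K1 × Fin K2 → U0 × U1 × U2 := fun t x o =>
    (x.1, x.2.1 (n1 t o), x.2.2 (n2 t o))
  -- one codeword pair, reweighted, is dominated by the joint law
  have one : ∀ (k1 : Fin Q1 × Fin K1) (k2 : Fin Q2 × Fin K2) (φ : U0 × U1 × U2 → ℝ),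
      (∀ u, 0 ≤ φ u) → ∑ x : X, blockLaw p0 r1 r2 x *
        (w0 x.1 (x.2.1 k1) (x.2.2 k2) * φ (x.1, x.2.1 k1, x.2.2 k2)) ≤ ∑ u, P u * φ u := by
    intro k1 k2 φ hφ
    rw [blockLaw_one hr1 hr2 k1 k2 fun a b c => w0 a b c * φ (a, b, c)]
    simp only [Fintype.sum_prod_type, Finset.mul_sum]
    refine Finset.sum_le_sum fun a _ => Finset.sum_le_sum fun b _ => Finset.sum_le_sum fun c _ => ?_
    have := mul_le_mul_of_nonneg_right (hwP a b c) (hφ (a, b, c))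
    linarith
  have hv1 : ∀ t o, ∑ x : X, blockLaw p0 r1 r2 x * v t x o ≤ 1 := by
    intro t o
    have := one (n1 t o) (n2 t o) (fun _ => 1) fun _ => zero_le_one
    simpa [hPs] using this
  have hRdens : ∀ u, (trR (ρ u)).PosSemidef := fun u => (isDensity_trR (hρ u)).1
  have hLdens : ∀ u, (trL (ρ u)).PosSemidef := fun u => (isDensity_trL (hρ u)).1
  refine exists_code_of_blocks ρ hρ hM0 hM1 hM2 hμ
    (fun x n => E1 (x.1, x.2.1 n)) (fun x n => F1 (x.1, x.2.1 n))
    (fun x n => E2 (x.1, x.2.2 n)) (fun x n => F2 (x.1, x.2.2 n))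
    (fun x n => hE1 _) (fun x n => hF1 _) (fun x n => hE2 _) (fun x n => hF2 _)
    (fun t => (t.1, (ι1 t.2.1).1, (ι2 t.2.2).1)) n1 n2
    (fun m n => (m.1, Function.invFun ι1 (m.2.1, n.1)))
    (fun m n => (m.1, Function.invFun ι2 (m.2.2, n.1)))
    (fun t o => by simp [n1, hinv1]) (fun t o => by simp [n2, hinv2]) cw
    (fun t x o => v t x o / Fintype.card (Fin K1 × Fin K2))
    (fun t x o => div_nonneg (hw _ _ _) (Nat.cast_nonneg _)) hδ
    (B := 42 * ε + 26 * δ + 12 / δ * (16 * ε)) (s := 3 * ε) (fun t => ?_) (fun t => ?_)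
    (fun t => ?_) hΔ
  · refine (block_bound (fun x o => v t x o)
      (fun x o => ev (1 - E1 (x.1, x.2.1 (n1 t o))) (trR (ρ (cw t x o))))
      (fun x o => ev (1 - F1 (x.1, x.2.1 (n1 t o))) (trR (ρ (cw t x o))))
      (fun x o n' => ev (F1 (x.1, x.2.1 n')) (trR (ρ (cw t x o))))
      (fun x x' o n' => ev (E1 (x'.1, x'.2.1 n')) (trR (ρ (cw t x o)))) (n1 t) (ε := ε) (e := e1)
      (f := f1) (Nat.cast_nonneg _) hδ (fun o => ?_) (fun o => ?_) (fun o n' hn' => ?_) (hv1 t)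
      (fun o n' => ?_)).trans ?_
    · exact (one (n1 t o) (n2 t o) (fun u => ev (1 - E1 (u.1, u.2.1)) (trR (ρ u)))
        fun u => ev_nonneg (hE1 _).2 (hRdens u)).trans hE1a
    · exact (one (n1 t o) (n2 t o) (fun u => ev (1 - F1 (u.1, u.2.1)) (trR (ρ u)))
        fun u => ev_nonneg (hF1 _).2 (hRdens u)).trans hF1a
    · refine (blockLaw_two_left hr1 hr2 (Finset.ne_of_mem_erase hn').symm (n2 t o)
        fun a b c b' => w0 a b c * ev (F1 (a, b')) (trR (ρ (a, b, c)))).trans_le (le_trans ?_ hF1b)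
      refine Finset.sum_le_sum fun a _ => ?_
      simp only [Finset.mul_sum]
      rw [Finset.sum_comm]
      refine Finset.sum_le_sum fun b' _ => Finset.sum_le_sum fun b _ =>
        Finset.sum_le_sum fun c _ => ?_
      have := mul_le_mul_of_nonneg_right (hwP a b c) (mul_nonneg ((hr1 a).1 b')
        (ev_nonneg (hF1 (a, b')).1 (hRdens (a, b, c))))
      linarith
    · rw [Finset.sum_congr rfl fun x _ => Finset.mul_sum _ _ _, Finset.sum_comm]
      refine le_trans (Finset.sum_le_sum (g := fun x' : X => blockLaw p0 r1 r2 x' *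
        ∑ u, P u * ev (E1 (x'.1, x'.2.1 n')) (trR (ρ u))) fun x' _ => ?_) ?_
      · refine le_trans (le_of_eq ?_) (mul_le_mul_of_nonneg_left (one (n1 t o) (n2 t o)
          (fun u => ev (E1 (x'.1, x'.2.1 n')) (trR (ρ u)))
          fun u => ev_nonneg (hE1 _).1 (hRdens u)) (hμ.1 x'))
        rw [Finset.mul_sum]
        exact Finset.sum_congr rfl fun x _ => by simp only [v, cw]; ring
      · rw [blockLaw_one hr1 hr2 n' (n2 t o) fun a b _ =>
          ∑ u, P u * ev (E1 (a, b)) (trR (ρ u))]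
        refine le_trans (le_of_eq ?_) hE1b
        refine Finset.sum_congr rfl fun a _ => ?_
        rw [Finset.mul_sum]
        refine Finset.sum_congr rfl fun b _ => ?_
        rw [← Finset.sum_mul, (hr2 a).2]
        ring
    · rw [hcN1, hcM]
      have := mul_le_mul_of_nonneg_left he1 (by positivity : 0 ≤ 12 / δ)
      linarith
  · refine (block_bound (fun x o => v t x o)
      (fun x o => ev (1 - E2 (x.1, x.2.2 (n2 t o))) (trL (ρ (cw t x o))))
      (fun x o => ev (1 - F2 (x.1, x.2.2 (n2 t o))) (trL (ρ (cw t x o))))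
      (fun x o n' => ev (F2 (x.1, x.2.2 n')) (trL (ρ (cw t x o))))
      (fun x x' o n' => ev (E2 (x'.1, x'.2.2 n')) (trL (ρ (cw t x o)))) (n2 t) (ε := ε) (e := e2)
      (f := f2) (Nat.cast_nonneg _) hδ (fun o => ?_) (fun o => ?_) (fun o n' hn' => ?_) (hv1 t)
      (fun o n' => ?_)).trans ?_
    · exact (one (n1 t o) (n2 t o) (fun u => ev (1 - E2 (u.1, u.2.2)) (trL (ρ u)))
        fun u => ev_nonneg (hE2 _).2 (hLdens u)).trans hE2a
    · exact (one (n1 t o) (n2 t o) (fun u => ev (1 - F2 (u.1, u.2.2)) (trL (ρ u)))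
        fun u => ev_nonneg (hF2 _).2 (hLdens u)).trans hF2a
    · refine (blockLaw_two_right hr1 hr2 (Finset.ne_of_mem_erase hn').symm (n1 t o)
        fun a b c c' => w0 a b c * ev (F2 (a, c')) (trL (ρ (a, b, c)))).trans_le (le_trans ?_ hF2b)
      refine Finset.sum_le_sum fun a _ => ?_
      simp only [Finset.mul_sum]
      rw [Finset.sum_comm]
      refine Finset.sum_le_sum fun c' _ => ?_
      rw [Finset.sum_comm]
      refine Finset.sum_le_sum fun b _ => Finset.sum_le_sum fun c _ => ?_
      have := mul_le_mul_of_nonneg_right (hwP a b c) (mul_nonneg ((hr2 a).1 c')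
        (ev_nonneg (hF2 (a, c')).1 (hLdens (a, b, c))))
      linarith
    · rw [Finset.sum_congr rfl fun x _ => Finset.mul_sum _ _ _, Finset.sum_comm]
      refine le_trans (Finset.sum_le_sum (g := fun x' : X => blockLaw p0 r1 r2 x' *
        ∑ u, P u * ev (E2 (x'.1, x'.2.2 n')) (trL (ρ u))) fun x' _ => ?_) ?_
      · refine le_trans (le_of_eq ?_) (mul_le_mul_of_nonneg_left (one (n1 t o) (n2 t o)
          (fun u => ev (E2 (x'.1, x'.2.2 n')) (trL (ρ u)))
          fun u => ev_nonneg (hE2 _).1 (hLdens u)) (hμ.1 x'))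
        rw [Finset.mul_sum]
        exact Finset.sum_congr rfl fun x _ => by simp only [v, cw]; ring
      · rw [blockLaw_one hr1 hr2 (n1 t o) n' fun a _ c =>
          ∑ u, P u * ev (E2 (a, c)) (trL (ρ u))]
        refine le_trans (le_of_eq ?_) hE2b
        refine Finset.sum_congr rfl fun a _ => ?_
        rw [← Finset.sum_mul, (hr1 a).2, one_mul, Finset.mul_sum]
        exact Finset.sum_congr rfl fun c _ => by ring
    · rw [hcN2, hcM]
      have := mul_le_mul_of_nonneg_left he2 (by positivity : 0 ≤ 12 / δ)
      linarith
  · refine (second_moment hμ (v t) (ε := ε) (W := W) (fun o => ?_) (fun o o' ho => ?_)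
      (fun o => ?_) ?_).trans ?_
    · refine hwε.trans_eq ?_
      have := blockLaw_one (p0 := p0) hr1 hr2 (n1 t o) (n2 t o) w0
      refine Eq.trans ?_ this.symm
      simp only [Finset.mul_sum]
      exact Finset.sum_congr rfl fun a _ => Finset.sum_congr rfl fun b _ =>
        Finset.sum_congr rfl fun c _ => by ring
    · refine blockLaw_mul_le hp0 hr1 hr2 hw hwl hwr ?_
      by_contra! hcon
      exact ho (Prod.ext (congrArg Prod.snd hcon.1)
        (congrArg (fun k : Fin Q2 × Fin K2 => k.2) hcon.2))
    · calc _ ≤ W * ∑ x : X, blockLaw p0 r1 r2 x * v t x o := by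
            rw [Finset.mul_sum]
            refine Finset.sum_le_sum fun x _ => ?_
            have := mul_le_mul_of_nonneg_left (mul_le_mul_of_nonneg_right
              (hW x.1 (x.2.1 (n1 t o)) (x.2.2 (n2 t o)))
              (hw x.1 (x.2.1 (n1 t o)) (x.2.2 (n2 t o)))) (hμ.1 x)
            simp only [v]
            linarith
        _ ≤ W * 1 := mul_le_mul_of_nonneg_left (hv1 t o) hW0
        _ = W := mul_one W
    · exact hW0
    · rw [hcO]
      have := (div_le_iff₀ hO).2 hW'
      linarith

/-- A code sending all messages as a common message: every message triple has its own
independent codeword, which both receivers decode. -/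
theorem common_code
    (ρ : U0 × U1 × U2 → Matrix (Fin d1 × Fin d2) (Fin d1 × Fin d2) ℂ)
    (hρ : ∀ u, IsDensity (ρ u)) {M0 M1 M2 : ℕ} (hM0 : 0 < M0) (hM1 : 0 < M1) (hM2 : 0 < M2)
    {P : U0 × U1 × U2 → ℝ} (hP : IsProbDist P)
    {E1 : U0 × U1 → Matrix (Fin d1) (Fin d1) ℂ} {E2 : U0 × U2 → Matrix (Fin d2) (Fin d2) ℂ}
    (hE1 : ∀ v, IsPOVMElem (E1 v)) (hE2 : ∀ v, IsPOVMElem (E2 v)) {ε e1 e2 : ℝ} (hε : 0 ≤ ε)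
    (hE1a : ∑ u, P u * ev (1 - E1 (u.1, u.2.1)) (trR (ρ u)) ≤ ε)
    (hE2a : ∑ u, P u * ev (1 - E2 (u.1, u.2.2)) (trL (ρ u)) ≤ ε)
    (hE1b : ∑ u', P u' * ∑ u, P u * ev (E1 (u'.1, u'.2.1)) (trR (ρ u)) ≤ e1)
    (hE2b : ∑ u', P u' * ∑ u, P u * ev (E2 (u'.1, u'.2.2)) (trL (ρ u)) ≤ e2)
    {δ Δ : ℝ} (hδ : 0 < δ)
    (he1 : M0 * M1 * M2 * e1 ≤ ε) (he2 : M0 * M1 * M2 * e2 ≤ ε)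
    (hΔ : 4 * (10 * ε + 26 * δ + 12 / δ * ε) ≤ Δ) :
    ExistsBroadcastCode ρ M0 M1 M2 Δ := by
  classical
  have hcM : (Fintype.card (Fin M0 × Fin M1 × Fin M2) : ℝ) = M0 * M1 * M2 := by simp [mul_assoc]
  have hcU : (Fintype.card Unit : ℝ) = 1 := by simp
  have hz : ∀ (d : ℕ) (σ : Matrix (Fin d) (Fin d) ℂ), ev (1 - 1) σ = 0 := by
    intro d σ; simp [ev]
  have hone : ∀ d : ℕ, IsPOVMElem (1 : Matrix (Fin d) (Fin d) ℂ) := fun d =>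
    ⟨Matrix.PosSemidef.one, by rw [sub_self]; exact Matrix.PosSemidef.zero⟩
  refine exists_code_of_blocks (N1 := Unit) (N2 := Unit) (O := Unit)
    (M := Fin M0 × Fin M1 × Fin M2) ρ hρ hM0 hM1 hM2 hP
    (fun x _ => E1 (x.1, x.2.1)) (fun _ _ => 1) (fun x _ => E2 (x.1, x.2.2)) (fun _ _ => 1)
    (fun x n => hE1 _) (fun x n => hone _) (fun x n => hE2 _) (fun x n => hone _)
    (fun t => t) (fun _ _ => ()) (fun _ _ => ())
    (fun m _ => (m.1, m.2.1)) (fun m _ => (m.1, m.2.2)) (fun t o => rfl) (fun t o => rfl)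
    (fun _ x _ => x) (fun _ _ _ => 1 / Fintype.card Unit)
    (fun t x o => by simp) hδ
    (B := 10 * ε + 26 * δ + 12 / δ * ε) (s := 0) (fun t => ?_) (fun t => ?_)
    (fun t => by simp) (by linarith)
  · refine (block_bound (fun _ _ => 1) (fun x o => ev (1 - E1 (x.1, x.2.1)) (trR (ρ x)))
      (fun x o => ev (1 - 1) (trR (ρ x))) (fun x o n' => ev 1 (trR (ρ x)))
      (fun x x' o n' => ev (E1 (x'.1, x'.2.1)) (trR (ρ x))) (fun _ => ()) (ε := ε) (e := e1)
      (f := 0) (Nat.cast_nonneg _) hδ (fun o => ?_) (fun o => ?_) (fun o n' hn' => ?_)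
      (fun o => ?_) (fun o n' => ?_)).trans ?_
    · simpa using hE1a
    · simpa only [hz, mul_zero, Finset.sum_const_zero] using hε
    · simp at hn'
    · simp [hP.2]
    · refine le_trans (le_of_eq ?_) hE1b
      simp only [Finset.mul_sum, one_mul]
      rw [Finset.sum_comm]
      exact Finset.sum_congr rfl fun x _ => Finset.sum_congr rfl fun y _ => by ring
    · rw [hcU, hcM]
      have := mul_le_mul_of_nonneg_left he1 (by positivity : 0 ≤ 12 / δ)
      linarith
  · refine (block_bound (fun _ _ => 1) (fun x o => ev (1 - E2 (x.1, x.2.2)) (trL (ρ x)))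
      (fun x o => ev (1 - 1) (trL (ρ x))) (fun x o n' => ev 1 (trL (ρ x)))
      (fun x x' o n' => ev (E2 (x'.1, x'.2.2)) (trL (ρ x))) (fun _ => ()) (ε := ε) (e := e2)
      (f := 0) (Nat.cast_nonneg _) hδ (fun o => ?_) (fun o => ?_) (fun o n' hn' => ?_)
      (fun o => ?_) (fun o n' => ?_)).trans ?_
    · simpa using hE2a
    · simpa only [hz, mul_zero, Finset.sum_const_zero] using hε
    · simp at hn'
    · simp [hP.2]
    · refine le_trans (le_of_eq ?_) hE2b
      simp only [Finset.mul_sum, one_mul]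
      rw [Finset.sum_comm]
      exact Finset.sum_congr rfl fun x _ => Finset.sum_congr rfl fun y _ => by ring
    · rw [hcU, hcM]
      have := mul_le_mul_of_nonneg_left he2 (by positivity : 0 ≤ 12 / δ)
      linarith

end Scheme

/-! ### Rate splitting, codebook sizes and near-optimal tests -/

/-- Fourier–Motzkin elimination of the rate splitting: `c1`, `c2` are the rates moved from the
private messages to the cloud centre, `k1`, `k2` the rates of the satellite variants. -/
theorem rate_split {R1 R2 A B α β τ : ℝ} (hR1 : 0 ≤ R1) (hR2 : 0 ≤ R2) (hα : 0 ≤ α) (hβ : 0 ≤ β)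
    (hτ : 0 ≤ τ) (hA : R1 ≤ A) (hB : R2 ≤ B) (h3 : R1 + R2 + τ ≤ B + α)
    (h4 : R1 + R2 + τ ≤ A + β) (h5 : R1 + R2 + τ ≤ A + B) (hc : τ ≤ α + β) :
    ∃ c1 c2 k1 k2 : ℝ, 0 ≤ c1 ∧ c1 ≤ R1 ∧ 0 ≤ c2 ∧ c2 ≤ R2 ∧ 0 ≤ k1 ∧ 0 ≤ k2 ∧ τ ≤ k1 + k2 ∧
      R1 - c1 + k1 ≤ α ∧ R2 - c2 + k2 ≤ β ∧ c1 + c2 + (R1 - c1 + k1) ≤ A ∧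
      c1 + c2 + (R2 - c2 + k2) ≤ B := by
  obtain ⟨l1, a1, a2, a3⟩ : ∃ l1, 0 ≤ l1 ∧ R1 - α ≤ l1 ∧ (l1 = 0 ∨ l1 = R1 - α) :=
    ⟨max 0 (R1 - α), le_max_left _ _, le_max_right _ _, max_choice _ _⟩
  obtain ⟨l2, b1, b2, b3⟩ : ∃ l2, 0 ≤ l2 ∧ R2 - β ≤ l2 ∧ (l2 = 0 ∨ l2 = R2 - β) :=
    ⟨max 0 (R2 - β), le_max_left _ _, le_max_right _ _, max_choice _ _⟩
  obtain ⟨v1, p1, p2, p3⟩ : ∃ v1, v1 ≤ R1 ∧ v1 ≤ B - R2 ∧ (v1 = R1 ∨ v1 = B - R2) :=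
    ⟨min R1 (B - R2), min_le_left _ _, min_le_right _ _, min_choice _ _⟩
  obtain ⟨v2, q1, q2, q3⟩ : ∃ v2, v2 ≤ R2 ∧ v2 ≤ A - R1 ∧ (v2 = R2 ∨ v2 = A - R1) :=
    ⟨min R2 (A - R1), min_le_left _ _, min_le_right _ _, min_choice _ _⟩
  have hlv1 : l1 ≤ v1 := by rcases a3 with h | h <;> rcases p3 with h' | h' <;> linarith
  have hlv2 : l2 ≤ v2 := by rcases b3 with h | h <;> rcases q3 with h' | h' <;> linarith
  obtain ⟨D, d1, d2, d3⟩ : ∃ D, R1 + R2 + τ - α - β ≤ D ∧ l1 + l2 ≤ D ∧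
      (D = R1 + R2 + τ - α - β ∨ D = l1 + l2) :=
    ⟨max _ _, le_max_left _ _, le_max_right _ _, max_choice _ _⟩
  have hDv : D ≤ v1 + v2 := by
    rcases d3 with h | h
    · rcases p3 with h' | h' <;> rcases q3 with h'' | h'' <;> linarith
    · linarith
  have hDs : D ≤ A + B - (R1 + R2 + τ) := by
    rcases d3 with h | h
    · linarith
    · rcases a3 with h' | h' <;> rcases b3 with h'' | h'' <;> linarith
  obtain ⟨c1, e1, e2, e3⟩ : ∃ c1, c1 ≤ v1 ∧ c1 ≤ D - l2 ∧ (c1 = v1 ∨ c1 = D - l2) :=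
    ⟨min _ _, min_le_left _ _, min_le_right _ _, min_choice _ _⟩
  have hc1 : l1 ≤ c1 := by rcases e3 with h | h <;> linarith
  have hc2 : D - c1 ≤ v2 := by rcases e3 with h | h <;> linarith
  obtain ⟨n1, f1, f2, f3⟩ : ∃ n1, n1 ≤ α ∧ n1 ≤ A - D ∧ (n1 = α ∨ n1 = A - D) :=
    ⟨min _ _, min_le_left _ _, min_le_right _ _, min_choice _ _⟩
  obtain ⟨n2, g1, g2, g3⟩ : ∃ n2, n2 ≤ β ∧ n2 ≤ B - D ∧ (n2 = β ∨ n2 = B - D) :=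
    ⟨min _ _, min_le_left _ _, min_le_right _ _, min_choice _ _⟩
  refine ⟨c1, D - c1, n1 - (R1 - c1), n2 - (R2 - (D - c1)), by linarith, by linarith, by linarith,
    by linarith, ?_, ?_, ?_, by linarith, by linarith, by linarith, by linarith⟩
  · rcases f3 with h | h <;> linarith
  · rcases g3 with h | h <;> linarith
  · rcases f3 with h | h <;> rcases g3 with h' | h' <;> linarith

/-- Rounding of a rate to an integer size. -/
theorem exists_size {x : ℝ} (hx : 0 ≤ x) :
    ∃ n : ℕ, 0 < n ∧ (2 : ℝ) ^ x ≤ n ∧ (n : ℝ) ≤ 2 * 2 ^ x ∧ (x = 0 → n = 1) := by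
  have h1 : (1 : ℝ) ≤ 2 ^ x := Real.one_le_rpow (by norm_num) hx
  refine ⟨⌈(2 : ℝ) ^ x⌉₊, Nat.ceil_pos.2 (by linarith), Nat.le_ceil _, ?_, ?_⟩
  · have := Nat.ceil_lt_add_one (a := (2 : ℝ) ^ x) (by linarith)
    linarith
  · rintro rfl
    simp

/-- The sizes of the superposition codebook. The bounds on `Q1 * K1 - 1` hold also when `j1` is
smaller than `L`, since then the satellite codebook is trivial. -/
theorem exists_sizes {M0 M1 M2 : ℕ} {R0 R1 R2 L i1 i2 j1 j2 t : ℝ}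
    (hM0 : (M0 : ℝ) = 2 ^ R0) (hM1 : (M1 : ℝ) = 2 ^ R1) (hM2 : (M2 : ℝ) = 2 ^ R2)
    (hR1 : 0 ≤ R1) (hR2 : 0 ≤ R2) (ht : 0 ≤ t + L)
    (h1 : R0 + R1 ≤ i1 - L) (h2 : R0 + R2 ≤ i2 - L)
    (h3 : R0 + R1 + R2 ≤ i2 + j1 - t - 3 * L) (h4 : R0 + R1 + R2 ≤ i1 + j2 - t - 3 * L)
    (h5 : 2 * R0 + R1 + R2 ≤ i1 + i2 - t - 3 * L) (hc : t + L ≤ max j1 L + max j2 L - 2 * L) :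
    ∃ C1 Q1 K1 C2 Q2 K2 : ℕ, M1 ≤ C1 * Q1 ∧ M2 ≤ C2 * Q2 ∧ 0 < K1 ∧ 0 < K2 ∧
      (2 : ℝ) ^ t ≤ 2 ^ (-L) * (K1 * K2) ∧
      (M0 * C1 * C2 * (Q1 * K1 * 2 ^ (-i1)) : ℝ) ≤ 16 * 2 ^ (-L) ∧
      (M0 * C1 * C2 * (Q2 * K2 * 2 ^ (-i2)) : ℝ) ≤ 16 * 2 ^ (-L) ∧
      ((Q1 * K1 - 1) * 2 ^ (-j1) : ℝ) ≤ 4 * 2 ^ (-L) ∧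
      ((Q2 * K2 - 1) * 2 ^ (-j2) : ℝ) ≤ 4 * 2 ^ (-L) := by
  have hj1 := le_max_left j1 L
  have hj2 := le_max_left j2 L
  obtain ⟨c1, c2, k1, k2, a1, a2, a3, a4, a5, a6, a7, a8, a9, a10, a11⟩ :=
    rate_split (R1 := R1) (R2 := R2) (A := i1 - L - R0) (B := i2 - L - R0) (α := max j1 L - L)
      (β := max j2 L - L) (τ := t + L) hR1 hR2 (sub_nonneg.2 (le_max_right _ _))
      (sub_nonneg.2 (le_max_right _ _)) ht (by linarith) (by linarith) (by linarith) (by linarith)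
      (by linarith) (by linarith)
  obtain ⟨C1, -, C1l, C1u, -⟩ := exists_size a1
  obtain ⟨C2, -, C2l, C2u, -⟩ := exists_size a3
  obtain ⟨Q1, -, Q1l, Q1u, Q1z⟩ := exists_size (sub_nonneg.2 a2)
  obtain ⟨Q2, -, Q2l, Q2u, Q2z⟩ := exists_size (sub_nonneg.2 a4)
  obtain ⟨K1, K1p, K1l, K1u, K1z⟩ := exists_size a5
  obtain ⟨K2, K2p, K2l, K2u, K2z⟩ := exists_size a6
  have mono : ∀ {x y : ℝ}, x ≤ y → (2 : ℝ) ^ x ≤ 2 ^ y := fun h =>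
    Real.rpow_le_rpow_of_exponent_le (by norm_num) h
  have two : ∀ x y : ℝ, (2 : ℝ) ^ x * 2 ^ y = 2 ^ (x + y) := fun x y =>
    (Real.rpow_add (by norm_num) x y).symm
  have pos : ∀ x : ℝ, (0 : ℝ) < 2 ^ x := fun x => by positivity
  have cover : ∀ {M C Q : ℕ} {R c : ℝ}, (M : ℝ) = 2 ^ R → (2 : ℝ) ^ c ≤ C →
      (2 : ℝ) ^ (R - c) ≤ Q → M ≤ C * Q := by
    intro M C Q R c hM hC hQ
    have h : (M : ℝ) ≤ C * Q := by
      calc (M : ℝ) = 2 ^ c * 2 ^ (R - c) := by rw [hM, two]; congr 1; ring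
        _ ≤ C * Q := mul_le_mul hC hQ (pos _).le (Nat.cast_nonneg _)
    exact_mod_cast h
  have sat : ∀ {Q K : ℕ} {x k i : ℝ}, (Q : ℝ) ≤ 2 * 2 ^ x → (K : ℝ) ≤ 2 * 2 ^ k →
      R0 + (c1 + c2) + (x + k) ≤ i - L →
      (M0 * C1 * C2 * (Q * K * 2 ^ (-i)) : ℝ) ≤ 16 * 2 ^ (-L) := by
    intro Q K x k i hQ hK h
    calc (M0 * C1 * C2 * (Q * K * 2 ^ (-i)) : ℝ)
        ≤ 2 ^ R0 * (2 * 2 ^ c1) * (2 * 2 ^ c2) * (2 * 2 ^ x * (2 * 2 ^ k) * 2 ^ (-i)) := by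
          rw [hM0]; gcongr
      _ = 16 * (2 ^ R0 * 2 ^ c1 * 2 ^ c2 * 2 ^ x * 2 ^ k * 2 ^ (-i)) := by ring
      _ = 16 * 2 ^ (R0 + c1 + c2 + x + k + -i) := by simp only [two]
      _ ≤ 16 * 2 ^ (-L) := mul_le_mul_of_nonneg_left (mono (by linarith)) (by norm_num)
  have satF : ∀ {Q K : ℕ} {x k j : ℝ}, (Q : ℝ) ≤ 2 * 2 ^ x → (K : ℝ) ≤ 2 * 2 ^ k →
      (x = 0 → Q = 1) → (k = 0 → K = 1) → 0 ≤ x → 0 ≤ k → x + k ≤ max j L - L →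
      ((Q * K - 1) * 2 ^ (-j) : ℝ) ≤ 4 * 2 ^ (-L) := by
    intro Q K x k j hQ hK hx hk hx0 hk0 h
    rcases le_total j L with hj | hj
    · rw [max_eq_right hj] at h
      rw [hx (by linarith), hk (by linarith)]
      have := pos (-L)
      norm_num
      positivity
    · rw [max_eq_left hj] at h
      calc ((Q * K - 1) * 2 ^ (-j) : ℝ) ≤ 2 * 2 ^ x * (2 * 2 ^ k) * 2 ^ (-j) := by
            refine mul_le_mul_of_nonneg_right ?_ (pos _).le
            have : (Q * K : ℝ) ≤ 2 * 2 ^ x * (2 * 2 ^ k) :=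
              mul_le_mul hQ hK (Nat.cast_nonneg _) (by positivity)
            linarith
        _ = 4 * (2 ^ x * 2 ^ k * 2 ^ (-j)) := by ring
        _ = 4 * 2 ^ (x + k + -j) := by simp only [two]
        _ ≤ 4 * 2 ^ (-L) := mul_le_mul_of_nonneg_left (mono (by linarith)) (by norm_num)
  refine ⟨C1, Q1, K1, C2, Q2, K2, cover hM1 C1l Q1l, cover hM2 C2l Q2l, K1p, K2p, ?_,
    sat Q1u K1u (by linarith), sat Q2u K2u (by linarith),
    satF Q1u K1u Q1z K1z (by linarith) a5 a8, satF Q2u K2u Q2z K2z (by linarith) a6 a9⟩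
  calc (2 : ℝ) ^ t ≤ 2 ^ (-L + (k1 + k2)) := mono (by linarith)
    _ = 2 ^ (-L) * (2 ^ k1 * 2 ^ k2) := by rw [two, two]
    _ ≤ 2 ^ (-L) * (K1 * K2) := mul_le_mul_of_nonneg_left
        (mul_le_mul K1l K2l (pos _).le (Nat.cast_nonneg _)) (pos _).le

/-- A nearly optimal element of a down-set of reals, or an arbitrarily large one. -/
theorem exists_near_sSup {S : Set ℝ} (hS : ∀ d ∈ S, ∀ d' ≤ d, d' ∈ S) (h0 : (0 : ℝ) ∈ S) {Z η : ℝ}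
    (hZ : 0 ≤ Z) (hη : 0 < η) :
    ∃ i ∈ S, 0 ≤ i ∧ (sSup ((fun d : ℝ => (d : EReal)) '' S) ≤ ((i + η : ℝ) : EReal) ∨ Z ≤ i) := by
  by_cases h : Z ∈ S
  · exact ⟨Z, h, hZ, Or.inr le_rfl⟩
  · have hb : BddAbove S := ⟨Z, fun d hd => by
      by_contra! hlt
      exact h (hS d hd Z hlt.le)⟩
    obtain ⟨i, hi, hlt⟩ := exists_lt_of_lt_csSup ⟨0, h0⟩ (sub_lt_self (sSup S) hη)
    refine ⟨max i 0, ?_, le_max_right _ _, Or.inl (sSup_le ?_)⟩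
    · rcases max_choice i 0 with h | h <;> rw [h] <;> assumption
    · rintro _ ⟨d, hd, rfl⟩
      have := le_csSup hb hd
      exact EReal.coe_le_coe_iff.2 (by linarith [le_max_left i 0])

/-- A nearly minimal element of a set of reals that is bounded below. -/
theorem exists_near_sInf {S : Set ℝ} (hS : S.Nonempty) (hb : BddBelow S) {η : ℝ} (hη : 0 < η) :
    ∃ t ∈ S, ((t - η : ℝ) : EReal) ≤ sInf ((fun d : ℝ => (d : EReal)) '' S) := by
  obtain ⟨t, ht, hlt⟩ := exists_lt_of_csInf_lt hS (lt_add_of_pos_right (sInf S) hη)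
  refine ⟨t, ht, le_sInf ?_⟩
  rintro _ ⟨d, hd, rfl⟩
  have := csInf_le hb hd
  exact EReal.coe_le_coe_iff.2 (by linarith)

/-- A family of tests whose exponent nearly attains the hypothesis testing relative entropy, or is
at least `Z` when that entropy is large. -/
theorem exists_near_tests {U : Type*} [Fintype U] [DecidableEq U] {n : ℕ}
    (α β : U → Matrix (Fin n) (Fin n) ℂ) {ε Z η : ℝ} (hε : 0 ≤ ε)
    (hα : ∑ u, ev 1 (α u) = 1) (hβ : ∑ u, ev 1 (β u) ≤ 1) (hZ : 0 ≤ Z) (hη : 0 < η) :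
    ∃ (i : ℝ) (E : U → Matrix (Fin n) (Fin n) ℂ), 0 ≤ i ∧ (∀ u, IsPOVMElem (E u)) ∧
      1 - ε ≤ ∑ u, ev (E u) (α u) ∧ ∑ u, ev (E u) (β u) ≤ (2 : ℝ) ^ (-i) ∧
      (DH ε (cqState α) (cqState β) ≤ ((i + η : ℝ) : EReal) ∨ Z ≤ i) := by
  have htr : ∀ γ : U → Matrix (Fin n) (Fin n) ℂ,
      ((1 * cqState γ).trace).re = ∑ u, ev 1 (γ u) := by
    intro γ
    simp [ev, Matrix.trace, Fintype.sum_prod_type, cqState]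
  obtain ⟨i, hi, h0, h⟩ := exists_near_sSup
    (S := {d | ∃ E : Matrix (U × Fin n) (U × Fin n) ℂ, IsPOVMElem E ∧
      1 - ε ≤ ((E * cqState α).trace).re ∧ ((E * cqState β).trace).re ≤ (2 : ℝ) ^ (-d)})
    (fun d ⟨E, h1, h2, h3⟩ d' hd => ⟨E, h1, h2, h3.trans
      (Real.rpow_le_rpow_of_exponent_le (by norm_num) (by linarith))⟩)
    ⟨1, ⟨Matrix.PosSemidef.one, by rw [sub_self]; exact Matrix.PosSemidef.zero⟩,
      by rw [htr, hα]; linarith, by rw [htr]; simpa using hβ⟩ hZ hη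
  obtain ⟨E, h1, h2, h3⟩ := exists_tests α β hi
  exact ⟨i, E, h0, h1, h2, h3, h⟩

/-! ### Tests of the receivers and the rate bounds -/

theorem sum_swap {A B C M : Type*} [Fintype A] [Fintype B] [Fintype C] [AddCommMonoid M]
    (f : A × B × C → M) : ∑ u : A × C × B, f (u.1, u.2.2, u.2.1) = ∑ u, f u := by
  simp only [Fintype.sum_prod_type]
  exact Finset.sum_congr rfl fun a _ => Finset.sum_comm

/-- The two tests of one receiver, for its hypothesis testing mutual information and for its
conditional version, with their error probabilities written as averages over the joint law. -/
theorem receiver_tests {A B C : Type*} [Fintype A] [Fintype B] [Fintype C] [DecidableEq A]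
    [DecidableEq B] {n : ℕ} {P : A × B × C → ℝ} (hP : IsProbDist P) {r : A → B → ℝ}
    (hr : ∀ a, IsProbDist (r a))
    (hr' : ∀ a b, ∑ c, P (a, b, c) = (∑ b, ∑ c, P (a, b, c)) * r a b)
    (σ : A × B × C → Matrix (Fin n) (Fin n) ℂ) (hσ : ∀ u, IsDensity (σ u)) {ε Z η : ℝ}
    (hε : 0 ≤ ε) (hZ : 0 ≤ Z) (hη : 0 < η) :
    ∃ (i j : ℝ) (E F : A × B → Matrix (Fin n) (Fin n) ℂ), 0 ≤ i ∧ 0 ≤ j ∧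
      (∀ v, IsPOVMElem (E v)) ∧ (∀ v, IsPOVMElem (F v)) ∧
      ∑ u, P u * ev (1 - E (u.1, u.2.1)) (σ u) ≤ ε ∧
      ∑ u, P u * ev (1 - F (u.1, u.2.1)) (σ u) ≤ ε ∧
      ∑ a, ∑ b, (∑ b, ∑ c, P (a, b, c)) * r a b * ∑ u, P u * ev (E (a, b)) (σ u)
        ≤ (2 : ℝ) ^ (-i) ∧
      ∑ a, ∑ b, r a b * ∑ b', ∑ c, P (a, b', c) * ev (F (a, b)) (σ (a, b', c))
        ≤ (2 : ℝ) ^ (-j) ∧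
      (DH ε (cqState fun v : A × B => ∑ c, (P (v.1, v.2, c) : ℂ) • σ (v.1, v.2, c))
        (cqState fun v : A × B =>
          ((∑ c, P (v.1, v.2, c) : ℝ) : ℂ) • ∑ u, (P u : ℂ) • σ u)
        ≤ ((i + η : ℝ) : EReal) ∨ Z ≤ i) ∧
      (DH ε (cqState fun v : A × B => ∑ c, (P (v.1, v.2, c) : ℂ) • σ (v.1, v.2, c))
        (cqState fun v : A × B =>
          (((∑ c, P (v.1, v.2, c)) / (∑ b, ∑ c, P (v.1, b, c)) : ℝ) : ℂ) •
            ∑ b, ∑ c, (P (v.1, b, c) : ℂ) • σ (v.1, b, c))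
        ≤ ((j + η : ℝ) : EReal) ∨ Z ≤ j) := by
  have hs : ∑ a, ∑ b, ∑ c, P (a, b, c) = 1 := by
    rw [← hP.2]; simp only [Fintype.sum_prod_type]
  have e1 : ∀ (E : A × B → Matrix (Fin n) (Fin n) ℂ),
      ∑ v : A × B, ev (E v) (∑ c, (P (v.1, v.2, c) : ℂ) • σ (v.1, v.2, c))
        = ∑ u, P u * ev (E (u.1, u.2.1)) (σ u) := by
    intro E
    simp only [ev_sum_right, ev_smul_right, Fintype.sum_prod_type]
  have e2 : ∀ (E : A × B → Matrix (Fin n) (Fin n) ℂ),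
      ∑ v : A × B, ev (E v) (((∑ c, P (v.1, v.2, c) : ℝ) : ℂ) • ∑ u, (P u : ℂ) • σ u)
        = ∑ a, ∑ b, (∑ b, ∑ c, P (a, b, c)) * r a b * ∑ u, P u * ev (E (a, b)) (σ u) := by
    intro E
    rw [Fintype.sum_prod_type]
    refine Finset.sum_congr rfl fun a _ => Finset.sum_congr rfl fun b _ => ?_
    rw [ev_smul_right, ev_sum_right, hr']
    simp only [ev_smul_right]
  have e3 : ∀ (F : A × B → Matrix (Fin n) (Fin n) ℂ),
      ∑ v : A × B, ev (F v) ((((∑ c, P (v.1, v.2, c)) / (∑ b, ∑ c, P (v.1, b, c)) : ℝ) : ℂ) •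
            ∑ b, ∑ c, (P (v.1, b, c) : ℂ) • σ (v.1, b, c))
        = ∑ a, ∑ b, r a b * ∑ b', ∑ c, P (a, b', c) * ev (F (a, b)) (σ (a, b', c)) := by
    intro F
    rw [Fintype.sum_prod_type]
    refine Finset.sum_congr rfl fun a _ => Finset.sum_congr rfl fun b _ => ?_
    rw [ev_smul_right, hr']
    simp only [ev_sum_right, ev_smul_right]
    by_cases h0 : ∑ b, ∑ c, P (a, b, c) = 0
    · -- the whole slice over `a` carries no mass, so both sides vanish
      have h1 : ∀ b c, P (a, b, c) = 0 := by
        intro b c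
        have h2 := (Finset.sum_eq_zero_iff_of_nonneg
          (fun b _ => Finset.sum_nonneg fun c _ => hP.1 _)).1 h0 b (Finset.mem_univ _)
        exact (Finset.sum_eq_zero_iff_of_nonneg (fun c _ => hP.1 _)).1 h2 c (Finset.mem_univ _)
      simp [h1]
    · rw [mul_div_cancel_left₀ _ h0]
  have h1α : ∑ v : A × B, ev 1 (∑ c, (P (v.1, v.2, c) : ℂ) • σ (v.1, v.2, c)) = 1 := by
    rw [e1 fun _ => 1]
    simp only [ev_one (hσ _), mul_one, hP.2]
  have hp : ∀ a, ∑ b, (∑ b, ∑ c, P (a, b, c)) * r a b = ∑ b, ∑ c, P (a, b, c) := by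
    intro a
    rw [← Finset.mul_sum, (hr a).2, mul_one]
  have h1β : ∑ v : A × B, ev 1 (((∑ c, P (v.1, v.2, c) : ℝ) : ℂ) • ∑ u, (P u : ℂ) • σ u)
      ≤ 1 := by
    rw [e2 fun _ => 1]
    simp only [ev_one (hσ _), mul_one, hP.2, hp, hs, le_refl]
  have h1γ : ∑ v : A × B, ev 1 ((((∑ c, P (v.1, v.2, c)) / (∑ b, ∑ c, P (v.1, b, c)) : ℝ) : ℂ) •
            ∑ b, ∑ c, (P (v.1, b, c) : ℂ) • σ (v.1, b, c)) ≤ 1 := by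
    rw [e3 fun _ => 1]
    simp only [ev_one (hσ _), mul_one, ← Finset.sum_mul, (hr _).2, one_mul, hs, le_refl]
  have comp : ∀ E : A × B → Matrix (Fin n) (Fin n) ℂ,
      1 - ε ≤ ∑ v : A × B, ev (E v) (∑ c, (P (v.1, v.2, c) : ℂ) • σ (v.1, v.2, c)) →
      ∑ u, P u * ev (1 - E (u.1, u.2.1)) (σ u) ≤ ε := by
    intro E h
    rw [e1] at h
    simp only [ev_sub_left, ev_one (hσ _), mul_sub, mul_one, Finset.sum_sub_distrib, hP.2]
    linarith
  obtain ⟨i, E, hi, hE, hEa, hEb, hEd⟩ := exists_near_tests _ _ hε h1α h1β hZ hη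
  obtain ⟨j, F, hj, hF, hFa, hFb, hFd⟩ := exists_near_tests _ _ hε h1α h1γ hZ hη
  exact ⟨i, j, E, F, hi, hj, hE, hF, comp E hEa, comp F hFa, (e2 E).symm.trans_le hEb,
    (e3 F).symm.trans_le hFb, hEd, hFd⟩

/-- A near-maximiser satisfies the rate bound, since it is either large or nearly optimal. -/
theorem rate_of_near {I : EReal} {x i c η Z L : ℝ} (h : (x : EReal) ≤ I - (c : ℝ) - (L : ℝ))
    (hd : I ≤ ((i + η : ℝ) : EReal) ∨ Z ≤ i) (hZ : x + c + L ≤ Z + η) : x ≤ i + η - c - L := by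
  rcases hd with hd | hd
  · have := h.trans (EReal.sub_le_sub (EReal.sub_le_sub hd le_rfl) le_rfl)
    exact_mod_cast this
  · linarith

/-- The version of `rate_of_near` for a sum of two information quantities. -/
theorem rate_of_near_add {I J T : EReal} {x i j t c η Z L : ℝ}
    (h : (x : EReal) ≤ I + J - T - (c : ℝ) - (L : ℝ)) (hi : 0 ≤ i) (hj : 0 ≤ j)
    (hη : 0 ≤ η)
    (hT : ((t - η : ℝ) : EReal) ≤ T)
    (hI : I ≤ ((i + η : ℝ) : EReal) ∨ Z ≤ i) (hJ : J ≤ ((j + η : ℝ) : EReal) ∨ Z ≤ j)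
    (hZ : x + t + c + L ≤ Z) : x ≤ i + j - t + 3 * η - c - L := by
  rcases hI with hI | hI
  · rcases hJ with hJ | hJ
    · have := h.trans (EReal.sub_le_sub (EReal.sub_le_sub (EReal.sub_le_sub
        (add_le_add hI hJ) hT) le_rfl) le_rfl)
      have h2 : x ≤ (i + η) + (j + η) - (t - η) - c - L := by exact_mod_cast this
      linarith
    · linarith
  · linarith

section Marton

variable {U0 U1 U2 : Type*} [Fintype U0] [Fintype U1] [Fintype U2]
  [DecidableEq U0] [DecidableEq U1] [DecidableEq U2] {d1 d2 : ℕ}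

/-- When the claimed error is at least one, rejecting everything is a valid code. -/
theorem trivial_code [Nonempty (U0 × U1 × U2)]
    (ρ : U0 × U1 × U2 → Matrix (Fin d1 × Fin d2) (Fin d1 × Fin d2) ℂ) (M0 M1 M2 : ℕ) {δ : ℝ}
    (hδ : 1 ≤ δ) : ExistsBroadcastCode ρ M0 M1 M2 δ := by
  refine ⟨fun _ => Classical.arbitrary _, fun _ => 0, fun _ => 0, fun _ => Matrix.PosSemidef.zero,
    ?_, fun _ => Matrix.PosSemidef.zero, ?_, ?_⟩
  · simpa using Matrix.PosSemidef.one
  · simpa using Matrix.PosSemidef.one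
  · simpa using hδ

/-- The numerical choice `δ = √ε` of the regularisation parameter. -/
theorem error_bound {ε : ℝ} (hε0 : 0 < ε) (h : 2 ^ 7 * ε ^ ((1 : ℝ) / 6) < 1) :
    4 * (42 * ε + 26 * √ε + 12 / √ε * (16 * ε)) + 4 * (3 * ε) ≤ 2 ^ 7 * ε ^ ((1 : ℝ) / 6) ∧
      4 * (10 * ε + 26 * √ε + 12 / √ε * ε) ≤ 2 ^ 7 * ε ^ ((1 : ℝ) / 6) := by
  obtain ⟨y, hy, hyε⟩ : ∃ y : ℝ, 0 < y ∧ y = ε ^ ((1 : ℝ) / 6) := ⟨_, by positivity, rfl⟩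
  have h6 : ε = y ^ 6 := by
    rw [hyε, ← Real.rpow_natCast, ← Real.rpow_mul hε0.le]
    norm_num
  rw [← hyε] at h ⊢
  have h3 : √ε = y ^ 3 := by
    rw [h6, show y ^ 6 = (y ^ 3) ^ 2 by ring, Real.sqrt_sq (by positivity)]
  have hd : ∀ c : ℝ, 12 / y ^ 3 * (c * y ^ 6) = 12 * c * y ^ 3 := by
    intro c
    field_simp
  have hd1 := hd 1
  rw [one_mul] at hd1
  rw [h3, h6, hd, hd1]
  have hy2 : y ^ 2 ≤ (1 / 128) ^ 2 := pow_le_pow_left₀ hy.le (by linarith) 2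
  have h3y : y ^ 3 ≤ (1 / 128) ^ 2 * y := by
    calc y ^ 3 = y ^ 2 * y := by ring
      _ ≤ _ := mul_le_mul_of_nonneg_right hy2 hy.le
  have h63 : y ^ 6 ≤ y ^ 3 := pow_le_pow_of_le_one hy.le (by linarith) (by norm_num)
  constructor <;> linarith

/-- One-shot Marton inner bound with common message. -/
theorem marton_common_message
    (ε : ℝ) (hε0 : 0 < ε) (hε1 : ε < 1)
    (p : U0 × U1 × U2 → ℝ) (hp : IsProbDist p)
    (ρ : U0 × U1 × U2 → Matrix (Fin d1 × Fin d2) (Fin d1 × Fin d2) ℂ)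
    (hρ : ∀ u, IsDensity (ρ u))
    (M0 M1 M2 : ℕ) (hM0 : 0 < M0) (hM1 : 0 < M1) (hM2 : 0 < M2)
    (h1 : ((Real.logb 2 M0 + Real.logb 2 M1 : ℝ) : EReal) ≤
      IH_U0U1_Y1 ε p ρ - ((2 : ℝ) : EReal) - ((Real.logb 2 (1 / ε) : ℝ) : EReal))
    (h2 : ((Real.logb 2 M0 + Real.logb 2 M2 : ℝ) : EReal) ≤
      IH_U0U2_Y2 ε p ρ - ((2 : ℝ) : EReal) - ((Real.logb 2 (1 / ε) : ℝ) : EReal))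
    (h3 : ((Real.logb 2 M0 + Real.logb 2 M1 + Real.logb 2 M2 : ℝ) : EReal) ≤
      IH_U0U2_Y2 ε p ρ + IH_U1_Y1_cond_U0 ε p ρ - smoothImaxCond ε p -
        ((4 : ℝ) : EReal) - ((4 * Real.logb 2 (1 / ε) : ℝ) : EReal))
    (h4 : ((Real.logb 2 M0 + Real.logb 2 M1 + Real.logb 2 M2 : ℝ) : EReal) ≤
      IH_U0U1_Y1 ε p ρ + IH_U2_Y2_cond_U0 ε p ρ - smoothImaxCond ε p -
        ((4 : ℝ) : EReal) - ((4 * Real.logb 2 (1 / ε) : ℝ) : EReal))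
    (h5 : ((2 * Real.logb 2 M0 + Real.logb 2 M1 + Real.logb 2 M2 : ℝ) : EReal) ≤
      IH_U0U1_Y1 ε p ρ + IH_U0U2_Y2 ε p ρ - smoothImaxCond ε p -
        ((4 : ℝ) : EReal) - ((4 * Real.logb 2 (1 / ε) : ℝ) : EReal)) :
    ExistsBroadcastCode ρ M0 M1 M2 (2 ^ 7 * ε ^ ((1 : ℝ) / 6)) := by
  have hne : Nonempty (U0 × U1 × U2) := by
    by_contra h
    rw [not_nonempty_iff] at h
    simpa using hp.2
  rcases le_or_gt 1 (2 ^ 7 * ε ^ ((1 : ℝ) / 6)) with hbig | hsmall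
  · exact trivial_code ρ M0 M1 M2 hbig
  obtain ⟨hΔ1, hΔ2⟩ := error_bound hε0 hsmall
  have hlog : ∀ M : ℕ, 0 < M → 0 ≤ Real.logb 2 M ∧ (M : ℝ) = 2 ^ Real.logb 2 M := fun M hM =>
    ⟨Real.logb_nonneg (by norm_num) (by exact_mod_cast hM),
      (Real.rpow_logb (by norm_num) (by norm_num) (by exact_mod_cast hM)).symm⟩
  obtain ⟨R0n, e0⟩ := hlog M0 hM0
  obtain ⟨R1n, e1⟩ := hlog M1 hM1
  obtain ⟨R2n, e2⟩ := hlog M2 hM2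
  generalize Real.logb 2 M0 = R0 at *
  generalize Real.logb 2 M1 = R1 at *
  generalize Real.logb 2 M2 = R2 at *
  have hL0 : 0 ≤ Real.logb 2 (1 / ε) :=
    Real.logb_nonneg (by norm_num) ((one_le_div hε0).2 hε1.le)
  have hεL : ε = (2 : ℝ) ^ (-Real.logb 2 (1 / ε)) := by
    rw [one_div, Real.logb_inv, neg_neg, Real.rpow_logb (by norm_num) (by norm_num) hε0]
  generalize Real.logb 2 (1 / ε) = L at *
  -- a nearly optimal smoothing of the law, and its likelihood ratio weights
  have hs : ∑ a, ∑ b, ∑ c, p (a, b, c) = 1 := by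
    rw [← hp.2]; simp only [Fintype.sum_prod_type]
  have hTne : {d : ℝ | ∃ P' : U0 × U1 × U2 → ℝ, (∀ x, 0 ≤ P' x ∧ P' x ≤ p x) ∧ l1dist p P' ≤ ε ∧
      ∀ u : U0 × U1 × U2, P' u ≤ (2 : ℝ) ^ d * ((∑ b, p (u.1, u.2.1, b)) *
        (∑ a, p (u.1, a, u.2.2)) / (∑ a, ∑ b, p (u.1, a, b)))}.Nonempty := by
    by_contra hempty
    rw [Set.not_nonempty_iff_eq_empty] at hempty
    have htop : smoothImaxCond ε p = ⊤ := by
      rw [smoothImaxCond, Dmax, hempty]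
      simp
    rw [htop] at h5
    simp only [sub_eq_add_neg, EReal.neg_top, EReal.add_bot, EReal.bot_add, le_bot_iff] at h5
    exact EReal.coe_ne_bot _ h5
  -- a mass of at least `1 - ε` is at most `2 ^ d`, so the exponents are bounded below
  have hlow : ∀ d ∈ {d : ℝ | ∃ P' : U0 × U1 × U2 → ℝ, (∀ x, 0 ≤ P' x ∧ P' x ≤ p x) ∧
      l1dist p P' ≤ ε ∧ ∀ u : U0 × U1 × U2, P' u ≤ (2 : ℝ) ^ d * ((∑ b, p (u.1, u.2.1, b)) *
        (∑ a, p (u.1, a, u.2.2)) / (∑ a, ∑ b, p (u.1, a, b)))}, 1 - ε ≤ (2 : ℝ) ^ d := by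
    rintro d ⟨P', hP', hd, hdt⟩
    obtain ⟨r1, r2, w0, hr1, hr2, -, -, -, hwt, -, -, -, hwε⟩ := exists_weights hp hP' hd hdt
    refine hwε.trans ?_
    calc ∑ a, ∑ b, ∑ c, (∑ b, ∑ c, p (a, b, c)) * r1 a b * r2 a c * w0 a b c
        ≤ ∑ a, ∑ b, ∑ c, (∑ b, ∑ c, p (a, b, c)) * r1 a b * r2 a c * 2 ^ d := by
          refine Finset.sum_le_sum fun a _ => Finset.sum_le_sum fun b _ =>
            Finset.sum_le_sum fun c _ => mul_le_mul_of_nonneg_left (hwt a b c) ?_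
          exact mul_nonneg (mul_nonneg (Finset.sum_nonneg fun _ _ => Finset.sum_nonneg fun _ _ =>
            hp.1 _) ((hr1 a).1 b)) ((hr2 a).1 c)
      _ = 2 ^ d := by
          simp only [← Finset.sum_mul, ← Finset.mul_sum, (hr1 _).2, (hr2 _).2, mul_one, hs, one_mul]
  have hεsmall : ε ≤ 1 / 4 := by
    have : √ε ^ 2 = ε := Real.sq_sqrt hε0.le
    have h' : 4 * (10 * ε + 26 * √ε + 12 / √ε * ε) < 1 := hΔ2.trans_lt hsmall
    have : 0 ≤ 12 / √ε * ε := by positivity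
    have : 0 ≤ √ε := Real.sqrt_nonneg _
    linarith
  obtain ⟨t, htS, htT⟩ := exists_near_sInf hTne ⟨-1, fun d hd => by
    by_contra! hlt
    have h6 : (2 : ℝ) ^ d ≤ 2 ^ (-1 : ℝ) :=
      Real.rpow_le_rpow_of_exponent_le (by norm_num) hlt.le
    have h7 : (2 : ℝ) ^ (-1 : ℝ) = 1 / 2 := by rw [Real.rpow_neg_one]; norm_num
    have h8 := hlow d hd
    rw [h7] at h6
    linarith⟩ (η := 1 / 4) (by norm_num)
  have ht0 : 0 ≤ t + L := by
    by_contra! hlt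
    have h6 : (2 : ℝ) ^ t ≤ ε := by
      -- `t < -L` would force `1 - ε ≤ ε`
      rw [hεL]
      exact Real.rpow_le_rpow_of_exponent_le (by norm_num) (by linarith)
    linarith [hlow t htS]
  obtain ⟨P', hP', hd, hdt⟩ := htS
  obtain ⟨r1, r2, w0, hr1, hr2, hpr1, hpr2, hw0, hwt, hwl, hwr, hwp, hwε⟩ :=
    exists_weights hp hP' hd hdt
  -- tests that nearly attain the four hypothesis testing quantities
  have hZ : (0 : ℝ) ≤ 2 * R0 + R1 + R2 + |t| + 4 * L + 4 := by positivity
  obtain ⟨i1, j1, E1, F1, hi1, hj1, hE1, hF1, hE1a, hF1a, hE1b, hF1b, hI1, hJ1⟩ :=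
    receiver_tests hp hr1 hpr1 (fun u => trR (ρ u)) (fun u => isDensity_trR (hρ u))
      (η := 1 / 4) hε0.le hZ (by norm_num)
  have hp' : IsProbDist fun u : U0 × U2 × U1 => p (u.1, u.2.2, u.2.1) :=
    ⟨fun u => hp.1 _, (sum_swap p).trans hp.2⟩
  have hcomm : ∀ a, ∑ c, ∑ b, p (a, b, c) = ∑ b, ∑ c, p (a, b, c) := fun a => Finset.sum_comm
  obtain ⟨i2, j2, E2, F2, hi2, hj2, hE2, hF2, hE2a, hF2a, hE2b, hF2b, hI2, hJ2⟩ :=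
    receiver_tests hp' hr2 (fun a c => by rw [hcomm]; exact hpr2 a c)
      (fun u => trL (ρ (u.1, u.2.2, u.2.1))) (fun u => isDensity_trL (hρ _))
      (η := 1 / 4) hε0.le hZ (by norm_num)
  rw [sum_swap fun u => p u * ev (1 - E2 (u.1, u.2.2)) (trL (ρ u))] at hE2a
  rw [sum_swap fun u => p u * ev (1 - F2 (u.1, u.2.2)) (trL (ρ u))] at hF2a
  simp only [hcomm] at hE2b hJ2
  have hsw : ∀ T : Matrix (Fin d2) (Fin d2) ℂ, ∑ u : U0 × U2 × U1, p (u.1, u.2.2, u.2.1) *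
      ev T (trL (ρ (u.1, u.2.2, u.2.1))) = ∑ u, p u * ev T (trL (ρ u)) := fun T =>
    sum_swap fun u => p u * ev T (trL (ρ u))
  simp only [hsw] at hE2b
  rw [sum_swap fun u => (p u : ℂ) • trL (ρ u)] at hI2
  have hF2b' : ∑ a, ∑ c, r2 a c * ∑ b, ∑ c', p (a, b, c') * ev (F2 (a, c)) (trL (ρ (a, b, c')))
      ≤ (2 : ℝ) ^ (-j2) := by
    refine le_trans (le_of_eq ?_) hF2b
    refine Finset.sum_congr rfl fun a _ => Finset.sum_congr rfl fun c _ => ?_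
    rw [Finset.sum_comm]
  have hJ2' : IH_U2_Y2_cond_U0 ε p ρ ≤ ((j2 + 1 / 4 : ℝ) : EReal) ∨
      2 * R0 + R1 + R2 + |t| + 4 * L + 4 ≤ j2 := by
    have hc2 : ∀ a, ∑ c, ∑ b, (p (a, b, c) : ℂ) • trL (ρ (a, b, c)) =
      ∑ b, ∑ c, (p (a, b, c) : ℂ) • trL (ρ (a, b, c)) := fun a => Finset.sum_comm
    simp only [hc2] at hJ2
    exact hJ2
  have ht := le_abs_self t
  have ht' := abs_nonneg t
  have g1 := rate_of_near h1 hI1 (by linarith)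
  have g2 := rate_of_near h2 hI2 (by linarith)
  have g3 := rate_of_near_add h3 hi2 hj1 (by norm_num) htT hI2 hJ1 (by linarith)
  have g4 := rate_of_near_add h4 hi1 hj2 (by norm_num) htT hI1 hJ2' (by linarith)
  have g5 := rate_of_near_add h5 hi1 hi2 (by norm_num) htT hI1 hI2 (by linarith)
  have hδ : 0 < √ε := Real.sqrt_pos.2 hε0
  by_cases hc : t + L ≤ max j1 L + max j2 L - 2 * L
  · obtain ⟨C1, Q1, K1, C2, Q2, K2, hC1, hC2, hK1, hK2, hW, a1, a2, b1, b2⟩ :=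
      exists_sizes (i1 := i1) (i2 := i2) (j1 := j1) (j2 := j2) e0 e1 e2 R1n R2n ht0
        (by linarith) (by linarith) (by linarith) (by linarith) (by linarith) hc
    rw [← hεL] at hW a1 a2 b1 b2
    exact superposition_code ρ hρ hM0 hM1 hM2
      (p0 := fun a => ∑ b, ∑ c, p (a, b, c))
      ⟨fun a => Finset.sum_nonneg fun _ _ => Finset.sum_nonneg fun _ _ => hp.1 _, hs⟩ hr1 hr2 hw0
      (by positivity) hwt hwl hwr hwp hp.2 hwε hE1 hF1 hE2 hF2 hE1a hF1a hE2a hF2a hE1b hF1b hE2b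
      hF2b' hC1 hC2 hK1 hK2 hδ hW a1 a2 b1 b2 hΔ1
  · -- `R0 + R1 + R2` is below both `i1 - L` and `i2 - L`, so every message can be sent as common
    push Not at hc
    have m1 := le_max_left j1 L
    have m2 := le_max_right j1 L
    have m3 := le_max_left j2 L
    have m4 := le_max_right j2 L
    have small : ∀ i : ℝ, R0 + R1 + R2 ≤ i - L → (M0 * M1 * M2 * 2 ^ (-i) : ℝ) ≤ ε := by
      intro i hi
      rw [e0, e1, e2, hεL, ← Real.rpow_add (by norm_num), ← Real.rpow_add (by norm_num),
        ← Real.rpow_add (by norm_num)]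
      exact Real.rpow_le_rpow_of_exponent_le (by norm_num) (by linarith)
    refine common_code ρ hρ hM0 hM1 hM2 hp hE1 hE2 hε0.le hE1a hE2a (le_trans (le_of_eq ?_) hE1b)
      (le_trans (le_of_eq ?_) hE2b) hδ (small i1 (by linarith)) (small i2 (by linarith)) hΔ2
    · rw [Fintype.sum_prod_type]
      refine Finset.sum_congr rfl fun a _ => ?_
      rw [Fintype.sum_prod_type]
      refine Finset.sum_congr rfl fun b _ => ?_
      rw [← hpr1, Finset.sum_mul]
    · rw [Fintype.sum_prod_type]
      refine Finset.sum_congr rfl fun a _ => ?_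
      rw [Fintype.sum_prod_type, Finset.sum_comm]
      refine Finset.sum_congr rfl fun c _ => ?_
      rw [← hpr2, Finset.sum_mul]

end Marton
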